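/- arXiv:2207.13609 — 5 statements merged into one kernel-verified Lean document; each statement's English description precedes it below -/
import Mathlib

section
/- Let ρ ∈ (0,1) and θ > 0. The tempered Γ-grey density l^θ_ρ is a probability density, i.e. l^θ_ρ ≥ 0 and ∫_1^∞ e^{-θy}/(Γ(ρ,θ) Γ(1-ρ) y (y-1)^ρ) dy = 1. -/
open MeasureTheory Real Set

/-- Upper incomplete gamma function `Γ(ρ, x) = ∫_x^∞ e^{-w} w^{ρ-1} dw`. -/
noncomputable def uGamma (ρ x : ℝ) : ℝ := ∫ w in Set.Ioi x, Real.exp (-w) * w ^ (ρ - 1)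

/-- The tempered Γ-grey density `l^θ_ρ`. -/
noncomputable def lDens (ρ θ y : ℝ) : ℝ :=
  if 1 < y then Real.exp (-θ * y) / (uGamma ρ θ * Real.Gamma (1 - ρ) * y * (y - 1) ^ ρ) else 0

theorem uG_integrable (ρ θ : ℝ) (hρ : ρ ∈ Set.Ioo (0 : ℝ) 1) (hθ : 0 < θ) :
    IntegrableOn (fun w : ℝ => Real.exp (-w) * w ^ (ρ - 1)) (Ioi θ) :=
  (Real.GammaIntegral_convergent hρ.1).mono_set (Ioi_subset_Ioi hθ.le)

theorem uG_pos (ρ θ : ℝ) (hρ : ρ ∈ Set.Ioo (0 : ℝ) 1) (hθ : 0 < θ) : 0 < uGamma ρ θ := by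
  unfold uGamma
  have hpos : ∀ w ∈ Ioi θ, 0 < Real.exp (-w) * w ^ (ρ - 1) := fun w hw => by
    have : 0 < w := hθ.trans hw
    positivity
  rw [setIntegral_pos_iff_support_of_nonneg_ae _ (uG_integrable ρ θ hρ hθ)]
  · have hsub : Ioi θ ⊆ Function.support (fun w : ℝ => Real.exp (-w) * w ^ (ρ - 1)) :=
      fun w hw => (hpos w hw).ne'
    rw [inter_eq_right.2 hsub]
    simp
  · filter_upwards [ae_restrict_mem measurableSet_Ioi] with w hw using (hpos w hw).le

theorem inner_x (ρ s : ℝ) (hρ : ρ ∈ Set.Ioo (0 : ℝ) 1) (hs : 0 < s) :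
    ∫ x in Ioi (0 : ℝ), x ^ (-ρ) * Real.exp (-(s * (x + 1)))
      = Real.Gamma (1 - ρ) * (Real.exp (-s) * s ^ (ρ - 1)) := by
  have h := Real.integral_rpow_mul_exp_neg_mul_Ioi (a := 1 - ρ) (r := s) (by linarith [hρ.2]) hs
  have e : ∀ x : ℝ, x ^ (-ρ) * Real.exp (-(s * (x + 1)))
      = Real.exp (-s) * (x ^ (1 - ρ - 1) * Real.exp (-(s * x))) := fun x => by
    rw [show -(s * (x + 1)) = -s + -(s * x) by ring, Real.exp_add,
      show 1 - ρ - 1 = -ρ by ring]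
    ring
  simp_rw [e]
  rw [integral_const_mul, h, one_div, Real.inv_rpow hs.le, ← Real.rpow_neg hs.le,
    show -(1 - ρ) = ρ - 1 by ring]
  ring

theorem main_prod (ρ θ : ℝ) (hρ : ρ ∈ Set.Ioo (0 : ℝ) 1) (hθ : 0 < θ) :
    Integrable (Function.uncurry fun x s : ℝ => x ^ (-ρ) * Real.exp (-(s * (x + 1))))
      ((volume.restrict (Ioi (0 : ℝ))).prod (volume.restrict (Ioi θ))) := by
  have hΓ : 0 < Real.Gamma (1 - ρ) := Real.Gamma_pos_of_pos (by linarith [hρ.2])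
  rw [integrable_prod_iff']
  · constructor
    · filter_upwards [ae_restrict_mem measurableSet_Ioi] with s hs
      have hs' : 0 < s := hθ.trans hs
      by_contra hn
      have h1 := inner_x ρ s hρ hs'
      have h2 := integral_undef hn
      simp only [Function.uncurry] at h2
      rw [h2] at h1
      have : 0 < Real.Gamma (1 - ρ) * (Real.exp (-s) * s ^ (ρ - 1)) := by positivity
      linarith
    · refine Integrable.congr ((uG_integrable ρ θ hρ hθ).const_mul (Real.Gamma (1 - ρ))) ?_
      filter_upwards [ae_restrict_mem measurableSet_Ioi] with s hs
      have hs' : 0 < s := hθ.trans hs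
      rw [← inner_x ρ s hρ hs']
      refine setIntegral_congr_fun measurableSet_Ioi fun x hx => ?_
      have hx' : (0 : ℝ) < x := hx
      simp only [Function.uncurry]
      rw [Real.norm_of_nonneg (by positivity)]
  · apply Measurable.aestronglyMeasurable
    unfold Function.uncurry
    fun_prop

theorem main_int (ρ θ : ℝ) (hρ : ρ ∈ Set.Ioo (0 : ℝ) 1) (hθ : 0 < θ) :
    ∫ x in Ioi (0 : ℝ), x ^ (-ρ) * (Real.exp (-(θ * (x + 1))) / (x + 1))
      = Real.Gamma (1 - ρ) * uGamma ρ θ := by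
  have h := integral_integral_swap (main_prod ρ θ hρ hθ)
  have e1 : ∫ s in Ioi θ, ∫ x in Ioi (0 : ℝ), x ^ (-ρ) * Real.exp (-(s * (x + 1)))
      = Real.Gamma (1 - ρ) * uGamma ρ θ := by
    unfold uGamma
    rw [← integral_const_mul]
    exact setIntegral_congr_fun measurableSet_Ioi fun s hs => inner_x ρ s hρ (hθ.trans hs)
  rw [← e1, ← h]
  refine setIntegral_congr_fun measurableSet_Ioi fun x hx => ?_
  have hx' : (0 : ℝ) < x := hx
  have h3 := integral_exp_mul_Ioi (a := -(x + 1)) (by linarith) θ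
  rw [integral_const_mul]
  congr 1
  rw [show (fun s : ℝ => Real.exp (-(s * (x + 1)))) = fun s => Real.exp (-(x + 1) * s) by
    ext s; congr 1; ring, h3, neg_div_neg_eq]
  congr 2
  ring

theorem stmt_1 (ρ θ : ℝ) (hρ : ρ ∈ Set.Ioo (0 : ℝ) 1) (hθ : 0 < θ) :
    (∀ y : ℝ, 0 ≤ lDens ρ θ y) ∧
    (∫ y in Set.Ioi (1 : ℝ),
        Real.exp (-θ * y) / (uGamma ρ θ * Real.Gamma (1 - ρ) * y * (y - 1) ^ ρ) = 1) := by
  have hΓ : 0 < Real.Gamma (1 - ρ) := Real.Gamma_pos_of_pos (by linarith [hρ.2])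
  have hu := uG_pos ρ θ hρ hθ
  constructor
  · intro y
    unfold lDens
    split_ifs with hy
    · have h1 : 0 < y - 1 := by linarith
      have h2 : 0 < y := by linarith
      positivity
    · exact le_rfl
  · have hm := (measurePreserving_add_right (volume : Measure ℝ) 1).setIntegral_preimage_emb
      (Homeomorph.addRight (1 : ℝ)).measurableEmbedding
      (fun y => Real.exp (-θ * y) / (uGamma ρ θ * Real.Gamma (1 - ρ) * y * (y - 1) ^ ρ))
      (Ioi 1)
    rw [← hm, preimage_add_const_Ioi, sub_self]
    have e : ∫ x in Ioi (0 : ℝ), Real.exp (-θ * (x + 1)) /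
          (uGamma ρ θ * Real.Gamma (1 - ρ) * (x + 1) * (x + 1 - 1) ^ ρ)
        = ∫ x in Ioi (0 : ℝ), (Real.Gamma (1 - ρ) * uGamma ρ θ)⁻¹ *
          (x ^ (-ρ) * (Real.exp (-(θ * (x + 1))) / (x + 1))) := by
      refine setIntegral_congr_fun measurableSet_Ioi fun x hx => ?_
      have hx' : (0 : ℝ) < x := hx
      have hp : 0 < x ^ ρ := by positivity
      rw [add_sub_cancel_right, Real.rpow_neg hx'.le, neg_mul]
      field_simp
    rw [e, integral_const_mul, main_int ρ θ hρ hθ]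
    exact inv_mul_cancel₀ (by positivity)
end

section
/- Let ρ ∈ (0,1], θ > 0, and let ν be a one-dimensional Γ-grey measure with parameters ρ, θ. Then ν has finite absolute moments of every order; every odd moment vanishes, ∫_ℝ x^{2n+1} dν(x) = 0 for all n ∈ ℕ; and for every integer n ≥ 1, ∫_ℝ x^{2n} dν(x) = (-1)^{n+1} · (2n)! · Γ(ρ) · θ^{ρ-n} · E^ρ_{1,ρ+1-n}(-θ) / (n! · 2^n · Γ(ρ,θ)). -/
open MeasureTheory Real Set

/-- Three-parameter (Prabhakar) Mittag-Leffler function `E^γ_{α,β}(z)`. -/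
noncomputable def prabhakar (α β γ z : ℝ) : ℝ :=
  ∑' j : ℕ, (Real.Gamma (γ + j) / Real.Gamma γ) * z ^ j
      / ((j.factorial : ℝ) * Real.Gamma (α * j + β))

noncomputable def cG (ρ : ℝ) : ℕ → ℕ → ℝ
  | 0, _ => 1
  | m + 1, j => cG ρ m j * (ρ + j - (m + 1))

noncomputable def TG (ρ : ℝ) (m : ℕ) (x : ℝ) : ℝ := ∑' j : ℕ, cG ρ m j * (-x) ^ j / j.factorial

noncomputable def FG (ρ : ℝ) : ℕ → ℝ → ℝ
  | 0, x => uGamma ρ x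
  | m + 1, x => - x ^ (ρ - (m + 1)) * TG ρ m x

lemma cG_bound {ρ : ℝ} (hρ : ρ ∈ Set.Ioc (0 : ℝ) 1) (m : ℕ) :
    ∃ A B : ℝ, 0 ≤ A ∧ 0 ≤ B ∧ ∀ j, |cG ρ m j| ≤ A * B ^ j := by
  induction m with
  | zero => exact ⟨1, 1, by simp, by simp, fun j => by simp [cG]⟩
  | succ m ih =>
    obtain ⟨A, B, hA, hB, h⟩ := ih
    refine ⟨A * (m + 1), B * 2, by positivity, by positivity, fun j => ?_⟩
    have h1 : |ρ + j - (m + 1)| ≤ (m + 1) * 2 ^ j := by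
      have h2 : ((j : ℝ) + 1) ≤ 2 ^ j := by exact_mod_cast Nat.lt_two_pow_self (n := j)
      have hm : (0 : ℝ) ≤ m := by positivity
      have hj : (0 : ℝ) ≤ j := by positivity
      have := hρ.1
      have := hρ.2
      have : ((m : ℝ) + 1) * (j + 1) ≤ (m + 1) * 2 ^ j := by gcongr
      rw [abs_le]
      constructor <;> nlinarith
    rw [cG, abs_mul]
    calc _ ≤ (A * B ^ j) * ((m + 1) * 2 ^ j) := by gcongr; exact h j
      _ = _ := by rw [mul_pow]; ring

lemma TG_summable {ρ : ℝ} (hρ : ρ ∈ Set.Ioc (0 : ℝ) 1) (m : ℕ) (x : ℝ) :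
    Summable (fun j : ℕ => cG ρ m j * (-x) ^ j / j.factorial) := by
  obtain ⟨A, B, hA, hB, h⟩ := cG_bound hρ m
  refine Summable.of_norm_bounded ((Real.summable_pow_div_factorial (B * |x|)).mul_left A) fun j => ?_
  rw [norm_div, norm_mul, norm_pow, Real.norm_eq_abs, Real.norm_eq_abs, abs_neg, Real.norm_eq_abs,
    Nat.abs_cast, mul_pow, ← mul_div_assoc, ← mul_assoc]
  gcongr
  exact h j

lemma TG_hasDerivAt {ρ : ℝ} (hρ : ρ ∈ Set.Ioc (0 : ℝ) 1) (m : ℕ) (x : ℝ) :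
    ∃ D, HasDerivAt (TG ρ m) D x ∧ x * D + (ρ - (m + 1)) * TG ρ m x = TG ρ (m + 1) x := by
  obtain ⟨A, B, hA, hB, h⟩ := cG_bound hρ m
  set R : ℝ := |x| + 1 with hR
  have hR1 : 1 ≤ R := by simp [hR]
  have hxR : x ∈ Ioo (-R) R := abs_lt.1 (by simp [hR])
  have hd := hasDerivAt_tsum_of_isPreconnected (t := Ioo (-R) R) (y₀ := x) (y := x)
    (g := fun j (y : ℝ) => cG ρ m j * (-y) ^ j / j.factorial)
    (g' := fun j y => cG ρ m j * (j * (-y) ^ (j - 1) * (-1)) / j.factorial)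
    ((Real.summable_pow_div_factorial (2 * B * R)).mul_left A) isOpen_Ioo
    isPreconnected_Ioo (fun j y _ => ?_) (fun j y hy => ?_) hxR (TG_summable hρ m x) hxR
  · refine ⟨_, hd, ?_⟩
    have hs := TG_summable hρ m x
    have hs' := TG_summable hρ (m + 1) x
    rw [TG, TG, ← tsum_mul_left, ← tsum_mul_left, ← Summable.tsum_add _ (hs.mul_left _)]
    · congr 1; ext j
      rcases j with _ | j
      · simp [cG]; ring
      · simp only [cG, Nat.add_sub_cancel, pow_succ]; push_cast; ring
    · refine (hs'.sub (hs.mul_left (ρ - (m + 1)))).congr fun j => ?_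
      rcases j with _ | j
      · simp [cG]; ring
      · simp only [cG, Nat.add_sub_cancel, pow_succ]; push_cast; ring
  · exact ((((hasDerivAt_neg y).pow j)).const_mul _).div_const _
  · have hy' : |y| ≤ R := (abs_lt.2 hy).le
    have h2 : (j : ℝ) ≤ 2 ^ j := by exact_mod_cast Nat.lt_two_pow_self.le
    rw [norm_div, norm_mul, norm_mul, norm_mul, norm_pow]
    simp only [Real.norm_eq_abs, abs_neg, Nat.abs_cast, abs_one, mul_one]
    rw [← mul_div_assoc]
    refine div_le_div_of_nonneg_right ?_ (by positivity)
    calc _ ≤ (A * B ^ j) * (2 ^ j * R ^ j) := by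
          gcongr
          · exact h j
          · calc |y| ^ (j - 1) ≤ R ^ (j - 1) := by gcongr
              _ ≤ R ^ j := pow_le_pow_right₀ hR1 (by omega)
      _ = _ := by rw [mul_pow, mul_pow]; ring

lemma TG_zero (ρ x : ℝ) : TG ρ 0 x = Real.exp (-x) := by
  simp [TG, cG, Real.exp_eq_exp_ℝ, NormedSpace.exp_eq_tsum_div]

lemma uGamma_hasDerivAt {ρ : ℝ} (hρ : ρ ∈ Set.Ioc (0 : ℝ) 1) {x : ℝ} (hx : 0 < x) :
    HasDerivAt (uGamma ρ) (-(Real.exp (-x) * x ^ (ρ - 1))) x := by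
  have hint := Real.GammaIntegral_convergent hρ.1
  set f : ℝ → ℝ := fun w => Real.exp (-w) * w ^ (ρ - 1) with hf
  have hc : ContinuousOn f (Ioi 0) := fun y hy => by
    have : y ≠ 0 := (ne_of_gt hy)
    exact ContinuousAt.continuousWithinAt (by fun_prop (disch := simp [this]))
  have hFTC : HasDerivAt (fun u => ∫ w in x..u, f w) (f x) x := by
    refine intervalIntegral.integral_hasDerivAt_right (by simp) ?_ (hc.continuousAt (Ioi_mem_nhds hx))
    exact hc.stronglyMeasurableAtFilter isOpen_Ioi x hx
  have := hFTC.const_sub (uGamma ρ x)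
  refine this.congr_of_eventuallyEq ?_
  filter_upwards [Ioi_mem_nhds hx] with u hu
  have := intervalIntegral.integral_Ioi_sub_Ioi' (f := f) (μ := volume) (a := x) (b := u)
    (hint.mono_set (Ioi_subset_Ioi hx.le)) (hint.mono_set (Ioi_subset_Ioi (le_of_lt hu)))
  rw [← this, uGamma, uGamma]; ring

lemma FG_hasDerivAt {ρ : ℝ} (hρ : ρ ∈ Set.Ioc (0 : ℝ) 1) (k : ℕ) {x : ℝ} (hx : 0 < x) :
    HasDerivAt (FG ρ k) (FG ρ (k + 1) x) x := by
  rcases k with _ | m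
  · convert! uGamma_hasDerivAt hρ hx using 1
    simp [FG, TG_zero]; ring
  · obtain ⟨D, hD, he⟩ := TG_hasDerivAt hρ m x
    convert! ((Real.hasDerivAt_rpow_const (p := ρ - (m + 1)) (Or.inl hx.ne')).neg).mul hD using 1
    rw [FG, ← he]
    have : x ^ (ρ - (m + 1)) = x ^ (ρ - (m + 1) - 1) * x := by
      rw [Real.rpow_sub_one hx.ne']; field_simp
    push_cast
    rw [show ρ - ((m : ℝ) + 1 + 1) = ρ - (m + 1) - 1 by ring]
    simp only [this, Pi.neg_apply]; ring

lemma cG_eq {ρ : ℝ} (hρ : ρ ∈ Set.Ioc (0 : ℝ) 1) (m j : ℕ) :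
    Real.Gamma (ρ + j) / Real.Gamma (ρ + j - m) = cG ρ m j := by
  induction m with
  | zero =>
    have : 0 < Real.Gamma (ρ + j) := Real.Gamma_pos_of_pos (by have := hρ.1; positivity)
    simp [cG, this.ne']
  | succ m ih =>
    rw [cG, ← ih]
    push_cast
    by_cases h : ρ + j - (m + 1) = 0
    · simp [h]
    · have := Real.Gamma_add_one h
      rw [show ρ + j - (m + 1) + 1 = ρ + j - m by ring] at this
      rw [this]
      by_cases h' : Real.Gamma (ρ + j - (m + 1)) = 0
      · simp [h']
      · field_simp

lemma prab_eq {ρ : ℝ} (hρ : ρ ∈ Set.Ioc (0 : ℝ) 1) (m : ℕ) (θ : ℝ) :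
    Real.Gamma ρ * prabhakar 1 (ρ + 1 - (m + 1 : ℕ)) ρ (-θ) = TG ρ m θ := by
  rw [prabhakar, TG, ← tsum_mul_left]
  congr 1; ext j
  rw [← cG_eq hρ]
  have := (Real.Gamma_pos_of_pos hρ.1).ne'
  rw [show (1 : ℝ) * j + (ρ + 1 - (m + 1 : ℕ)) = ρ + j - m by push_cast; ring]
  by_cases h' : Real.Gamma (ρ + j - m) = 0
  · simp [h']
  · field_simp

open scoped ContDiff Topology in
lemma iteratedDeriv_ofReal' (φ : ℝ → ℝ) (hφ : ContDiff ℝ ∞ φ) (m : ℕ) :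
    iteratedDeriv m (fun t => (φ t : ℂ)) = fun t => ((iteratedDeriv m φ t : ℝ) : ℂ) := by
  induction m with
  | zero => simp
  | succ m ih =>
    ext t
    rw [iteratedDeriv_succ, ih, iteratedDeriv_succ]
    have : DifferentiableAt ℝ (iteratedDeriv m φ) t :=
      (hφ.differentiable_iteratedDeriv m (by exact_mod_cast WithTop.coe_lt_top _)) t
    exact this.hasDerivAt.ofReal_comp.deriv

lemma memLp_of_int (ν : Measure ℝ) (m : ℕ) (hm : m ≠ 0) (h : Integrable (fun x : ℝ => x ^ m) ν) :
    MemLp id m ν := by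
  rw [← integrable_norm_rpow_iff (by fun_prop) (by simpa using hm) (by simp)]
  simpa using h.norm

open scoped ContDiff Topology in
open Filter in
lemma moment_step (ν : Measure ℝ) [IsFiniteMeasure ν] (φ : ℝ → ℝ) (hφ : ContDiff ℝ ∞ φ)
    (h : ∀ t, charFun ν t = φ t) (n : ℕ) (hn : MemLp id (2 * n : ℕ) ν) :
    MemLp id (2 * (n + 1) : ℕ) ν := by
  have hmom : Integrable (fun x : ℝ => x ^ (2 * n)) ν := by
    have := hn.integrable_norm_pow'
    refine this.congr (ae_of_all _ fun x => ?_)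
    simp [pow_mul]
  have hcos : ∀ t, Integrable (fun x : ℝ => x ^ (2 * n) * Real.cos (t * x)) ν := fun t =>
    hmom.mul_bdd (c := 1) (by fun_prop) (ae_of_all _ fun x => by simpa using Real.abs_cos_le_one _)
  set ψ := iteratedDeriv (2 * n) φ with hψ
  have hψC : ContDiff ℝ ∞ ψ := by
    rw [hψ, iteratedDeriv_eq_iterate]; exact hφ.iterate_deriv _
  have key : ∀ t, (-1) ^ n * ψ t = ∫ x, x ^ (2 * n) * Real.cos (t * x) ∂ν := by
    intro t
    have h1 := iteratedDeriv_charFun (t := t) hn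
    rw [show charFun ν = fun t => (φ t : ℂ) from funext h, iteratedDeriv_ofReal' φ hφ, pow_mul,
      Complex.I_sq] at h1
    have h2 : (((-1) ^ n * ψ t : ℝ) : ℂ) = ∫ x, (x : ℂ) ^ (2 * n) * Complex.exp (t * x * Complex.I) ∂ν := by
      push_cast
      beta_reduce at h1
      rw [hψ, h1, ← mul_assoc, ← mul_pow]; simp
    have hi : Integrable (fun x : ℝ => (x : ℂ) ^ (2 * n) * Complex.exp (t * x * Complex.I)) ν := by
      have := hmom.ofReal (𝕜 := ℂ)
      simp only [Complex.coe_algebraMap, Complex.ofReal_pow] at this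
      refine this.mul_bdd (c := 1) (by fun_prop) (ae_of_all _ fun x => ?_)
      rw [← Complex.ofReal_mul, Complex.norm_exp_ofReal_mul_I]
    have h3 := congrArg Complex.re h2
    rw [Complex.ofReal_re] at h3
    rw [h3]
    have := integral_re (𝕜 := ℂ) hi
    refine this.symm.trans (integral_congr_ae (ae_of_all _ fun x => ?_))
    show Complex.re _ = _
    rw [← Complex.ofReal_pow, ← Complex.ofReal_mul, Complex.re_ofReal_mul, Complex.exp_ofReal_mul_I_re]
  have heven : ∀ t, ψ (-t) = ψ t := by
    intro t
    have h1 := key t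
    have h2 := key (-t)
    simp only [neg_mul, Real.cos_neg] at h2
    rw [← h1] at h2
    exact mul_left_cancel₀ (pow_ne_zero _ (by norm_num)) h2
  have hd0 : deriv ψ 0 = 0 := by
    have := deriv_comp_neg ψ 0
    rw [show (fun x => ψ (-x)) = ψ from funext heven, neg_zero] at this
    linarith
  have hT := taylor_isLittleO_univ (x₀ := 0) (n := 2) (contDiff_infty.1 hψC 2)
  have hT' : Tendsto (fun x => (-1) ^ n * (ψ 0 - ψ x) / x ^ 2) (𝓝[≠] 0)
      (𝓝 ((-1) ^ n * (-(iteratedDeriv 2 ψ 0 / 2)))) := by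
    have h1 := (hT.tendsto_div_nhds_zero).mono_left (nhdsWithin_le_nhds (s := {0}ᶜ))
    have h2 := ((h1.add_const (iteratedDeriv 2 ψ 0 / 2)).neg).const_mul ((-1 : ℝ) ^ n)
    rw [zero_add] at h2
    refine h2.congr' ?_
    filter_upwards [self_mem_nhdsWithin] with x hx
    have hx : x ≠ 0 := hx
    simp [taylor_within_apply, Finset.sum_range_succ, iteratedDerivWithin_univ, iteratedDeriv_one, hd0]
    field_simp
    ring
  let u : ℕ → ℝ := fun k => 1 / ((k : ℝ) + 1)
  have hu0 : ∀ k, u k ≠ 0 := fun k => by positivity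
  have hu : Tendsto u atTop (𝓝[≠] 0) :=
    tendsto_nhdsWithin_iff.2 ⟨tendsto_one_div_add_atTop_nhds_zero_nat, .of_forall hu0⟩
  apply memLp_of_int _ _ (by simp)
  have hcosT : ∀ x : ℝ, Tendsto (fun t => (1 - Real.cos (t * x)) / t ^ 2) (𝓝[≠] 0) (𝓝 (x ^ 2 / 2)) := by
    intro x
    have hC : ContDiff ℝ 2 (fun t => Real.cos (t * x)) := by fun_prop
    have h1 := ((taylor_isLittleO_univ (x₀ := 0) (n := 2) hC).tendsto_div_nhds_zero).mono_left
      (nhdsWithin_le_nhds (s := {0}ᶜ))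
    have hd1 : deriv (fun t => Real.cos (t * x)) = fun t => - Real.sin (t * x) * x := by
      ext t
      exact (((hasDerivAt_mul_const x).cos)).deriv
    have hd2 : deriv (fun t => - Real.sin (t * x) * x) 0 = - x ^ 2 := by
      have := (((hasDerivAt_mul_const (x := (0:ℝ)) x).sin.neg).mul_const x).deriv
      simp at this
      simp [this]; ring
    have h2 := (h1.neg).add_const (x ^ 2 / 2)
    rw [neg_zero, zero_add] at h2
    refine h2.congr' ?_
    filter_upwards [self_mem_nhdsWithin] with t ht
    have ht : t ≠ 0 := ht
    have hd3 : iteratedDeriv 2 (fun t => Real.cos (t * x)) 0 = - x ^ 2 := by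
      rw [iteratedDeriv_succ, iteratedDeriv_one, hd1, hd2]
    simp only [taylor_within_apply, Finset.sum_range_succ, iteratedDerivWithin_univ, iteratedDeriv_one, hd3, hd1]
    simp
    field_simp
    ring
  have hI : Integrable (fun x : ℝ => x ^ (2 * n) * (x ^ 2 / 2)) ν := by
    refine integrable_of_tendsto
      (G := fun k x => x ^ (2 * n) * ((1 - Real.cos (u k * x)) / u k ^ 2))
      (ae_of_all _ fun x => ((hcosT x).comp hu).const_mul _) (fun k => by fun_prop) ?_
    have : ∀ k, ∫⁻ x, ‖x ^ (2 * n) * ((1 - Real.cos (u k * x)) / u k ^ 2)‖ₑ ∂ν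
        = ENNReal.ofReal ((-1) ^ n * (ψ 0 - ψ (u k)) / u k ^ 2) := by
      intro k
      have hi : Integrable (fun x : ℝ => x ^ (2 * n) * ((1 - Real.cos (u k * x)) / u k ^ 2)) ν := by
        refine ((hmom.sub (hcos (u k))).div_const (u k ^ 2)).congr (ae_of_all _ fun x => ?_)
        simp only [Pi.sub_apply]; ring
      have hnn : ∀ x : ℝ, 0 ≤ x ^ (2 * n) * ((1 - Real.cos (u k * x)) / u k ^ 2) := fun x => by
        have : 0 ≤ 1 - Real.cos (u k * x) := by linarith [Real.cos_le_one (u k * x)]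
        rw [pow_mul]; positivity
      simp_rw [fun x => Real.enorm_of_nonneg (hnn x)]
      rw [← ofReal_integral_eq_lintegral_ofReal hi (ae_of_all _ hnn)]
      congr 1
      have h0 := key 0
      simp only [zero_mul, Real.cos_zero, mul_one] at h0
      rw [mul_sub, h0, key, ← integral_sub hmom (hcos _), ← integral_div]
      congr 1; ext x; ring
    simp_rw [this]
    have hlim := (ENNReal.tendsto_ofReal (hT'.comp hu)).liminf_eq
    simp only [Function.comp_def] at hlim
    rw [hlim]
    exact ENNReal.ofReal_ne_top
  refine (hI.const_mul 2).congr (ae_of_all _ fun x => ?_)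
  simp only; rw [mul_add, pow_add]; ring

open scoped ContDiff in
lemma seq_contDiff (g : ℕ → ℝ → ℝ) (hg : ∀ k x, HasDerivAt (g k) (x * g (k + 1) x) x) (k : ℕ) :
    ContDiff ℝ ∞ (g k) := by
  rw [contDiff_infty]
  intro n
  induction n generalizing k with
  | zero =>
    exact contDiff_zero.2 (continuous_iff_continuousAt.2 fun x => (hg k x).continuousAt)
  | succ n ih =>
    push_cast
    rw [contDiff_succ_iff_deriv]
    refine ⟨fun x => (hg k x).differentiableAt, by simp, ?_⟩
    rw [show deriv (g k) = fun x => x * g (k + 1) x from funext fun x => (hg k x).deriv]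
    exact contDiff_id.mul (ih _)

open scoped ContDiff in
lemma iter_id_mul (f : ℝ → ℝ) (hf : ContDiff ℝ ∞ f) (m : ℕ) (x : ℝ) :
    iteratedDeriv (m + 1) (fun x => x * f x) x
      = x * iteratedDeriv (m + 1) f x + (m + 1) * iteratedDeriv m f x := by
  have hd : ∀ m x, HasDerivAt (iteratedDeriv m f) (iteratedDeriv (m + 1) f x) x := fun m x => by
    rw [iteratedDeriv_succ]
    exact (hf.differentiable_iteratedDeriv m (by exact_mod_cast WithTop.coe_lt_top _) x).hasDerivAt
  induction m generalizing x with
  | zero =>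
    rw [zero_add, iteratedDeriv_one]
    have := ((hasDerivAt_id x).mul (hd 0 x)).deriv
    simp only [iteratedDeriv_zero, zero_add] at this ⊢
    refine this.trans ?_
    simp; ring
  | succ m ih =>
    rw [iteratedDeriv_succ, funext ih]
    have := (((hasDerivAt_id x).mul (hd (m + 1) x)).add ((hd m x).const_mul ((m : ℝ) + 1))).deriv
    refine this.trans ?_
    simp; ring

lemma seq_step (g : ℕ → ℝ → ℝ) (hg : ∀ k x, HasDerivAt (g k) (x * g (k + 1) x) x) (k m : ℕ) :
    iteratedDeriv (m + 2) (g k) 0 = (m + 1) * iteratedDeriv m (g (k + 1)) 0 := by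
  rw [iteratedDeriv_succ', show deriv (g k) = fun x => x * g (k + 1) x from
    funext fun x => (hg k x).deriv, iter_id_mul _ (seq_contDiff g hg _)]
  simp

lemma seq_odd (g : ℕ → ℝ → ℝ) (hg : ∀ k x, HasDerivAt (g k) (x * g (k + 1) x) x) (n k : ℕ) :
    iteratedDeriv (2 * n + 1) (g k) 0 = 0 := by
  induction n generalizing k with
  | zero => simp [(hg k 0).deriv]
  | succ n ih =>
    rw [show 2 * (n + 1) + 1 = (2 * n + 1) + 2 by ring, seq_step g hg, ih, mul_zero]

lemma seq_even (g : ℕ → ℝ → ℝ) (hg : ∀ k x, HasDerivAt (g k) (x * g (k + 1) x) x) (n k : ℕ) :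
    iteratedDeriv (2 * n) (g k) 0 = (2 * n).factorial / (n.factorial * 2 ^ n) * g (k + n) 0 := by
  induction n generalizing k with
  | zero => simp
  | succ n ih =>
    rw [show 2 * (n + 1) = (2 * n) + 2 by ring, seq_step g hg, ih, Nat.factorial_succ (2 * n + 1),
      Nat.factorial_succ (2 * n), Nat.factorial_succ n, show k + (n + 1) = k + 1 + n by ring]
    push_cast
    field_simp
    ring

theorem stmt_4 (ρ θ : ℝ) (hρ : ρ ∈ Set.Ioc (0 : ℝ) 1) (hθ : 0 < θ)
    (ν : Measure ℝ) [IsProbabilityMeasure ν]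
    (hchar : ∀ ξ : ℝ, ∫ x, Complex.exp (Complex.I * ((ξ * x : ℝ) : ℂ)) ∂ν
        = ((uGamma ρ (θ + ξ ^ 2 / 2) / uGamma ρ θ : ℝ) : ℂ)) :
    (∀ k : ℕ, Integrable (fun x : ℝ => |x| ^ k) ν) ∧
    (∀ n : ℕ, ∫ x, x ^ (2 * n + 1) ∂ν = 0) ∧
    (∀ n : ℕ, 1 ≤ n → ∫ x, x ^ (2 * n) ∂ν
        = (-1 : ℝ) ^ (n + 1) * ((2 * n).factorial : ℝ) * Real.Gamma ρ * θ ^ (ρ - (n : ℝ))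
            * prabhakar 1 (ρ + 1 - n) ρ (-θ)
            / ((n.factorial : ℝ) * 2 ^ n * uGamma ρ θ)) := by
  have hpos : ∀ ξ : ℝ, 0 < θ + ξ ^ 2 / 2 := fun ξ => by positivity
  set g : ℕ → ℝ → ℝ := fun k ξ => FG ρ k (θ + ξ ^ 2 / 2) / uGamma ρ θ with hgdef
  have hg : ∀ k x, HasDerivAt (g k) (x * g (k + 1) x) x := by
    intro k x
    have h1 : HasDerivAt (fun ξ : ℝ => θ + ξ ^ 2 / 2) x x := by
      have := (((hasDerivAt_id x).pow 2).div_const 2).const_add θ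
      convert! this using 1
      simp
    have := ((FG_hasDerivAt hρ k (hpos x)).comp x h1).div_const (uGamma ρ θ)
    convert! this using 1
    simp only [hgdef]; ring
  have hC := seq_contDiff g hg 0
  have hcf : ∀ t, charFun ν t = ((g 0 t : ℝ) : ℂ) := by
    intro t
    rw [charFun_apply_real]
    have := hchar t
    simp only [hgdef, FG]
    rw [← this]
    congr 1; ext x; congr 1; push_cast; ring
  have hmem : ∀ n : ℕ, MemLp id (2 * n : ℕ) ν := by
    intro n
    induction n with
    | zero => simpa using (by fun_prop : AEStronglyMeasurable (id : ℝ → ℝ) ν)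
    | succ n ih => exact moment_step ν (g 0) hC hcf n ih
  have hmem' : ∀ k : ℕ, MemLp id k ν := fun k =>
    (hmem k).mono_exponent (by exact_mod_cast (by omega : k ≤ 2 * k))
  have hmomC : ∀ k : ℕ, ((iteratedDeriv k (g 0) 0 : ℝ) : ℂ)
      = Complex.I ^ k * ((∫ x, x ^ k ∂ν : ℝ) : ℂ) := by
    intro k
    have := iteratedDeriv_charFun_zero (hmem' k)
    rw [show charFun ν = fun t => ((g 0 t : ℝ) : ℂ) from funext hcf,
      iteratedDeriv_ofReal' _ hC] at this
    exact this
  refine ⟨fun k => ?_, fun n => ?_, fun n hn => ?_⟩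
  · simpa using (hmem' k).integrable_norm_pow'
  · have := hmomC (2 * n + 1)
    rw [seq_odd g hg, Complex.ofReal_zero, eq_comm, mul_eq_zero] at this
    rcases this with h | h
    · exact absurd h (pow_ne_zero _ Complex.I_ne_zero)
    · exact_mod_cast h
  · have h1 := hmomC (2 * n)
    rw [seq_even g hg, pow_mul, Complex.I_sq] at h1
    have h2 : ((2 * n).factorial : ℝ) / (n.factorial * 2 ^ n) * g (0 + n) 0
        = (-1) ^ n * ∫ x, x ^ (2 * n) ∂ν := by exact_mod_cast h1
    have h3 : ∫ x, x ^ (2 * n) ∂ν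
        = (-1) ^ n * (((2 * n).factorial : ℝ) / (n.factorial * 2 ^ n) * g (0 + n) 0) := by
      rw [h2, ← mul_assoc, ← mul_pow]; simp
    rw [h3]
    obtain ⟨m, rfl⟩ : ∃ m, n = m + 1 := ⟨n - 1, by omega⟩
    have h4 := prab_eq hρ m θ
    have h5 : g (0 + (m + 1)) 0 = - θ ^ (ρ - ((m + 1 : ℕ) : ℝ)) *
        (Real.Gamma ρ * prabhakar 1 (ρ + 1 - (m + 1 : ℕ)) ρ (-θ)) / uGamma ρ θ := by
      rw [h4, zero_add]
      simp only [hgdef, FG]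
      simp
    rw [h5, pow_succ (-1 : ℝ) (m + 1)]
    simp only [div_eq_mul_inv, mul_inv]
    ring
end

section
/- For every n ∈ ℕ, ρ ∈ (0,1) and θ > 0, there exists a probability measure ν on ℝⁿ (Euclidean space with inner product ⟨·,·⟩ and norm ‖·‖) such that ∫_{ℝⁿ} e^{i⟨ξ,x⟩} dν(x) = Γ(ρ, θ + ‖ξ‖²/2)/Γ(ρ,θ) for all ξ ∈ ℝⁿ; namely, the Gaussian variance mixture ν(A) = ∫_1^∞ N(0, s·Iₙ)(A) · l^θ_ρ(s) ds, where N(0, s·Iₙ) is the n-fold product of the centered Gaussian measure on ℝ with variance s, has this characteristic function. -/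
open MeasureTheory Real Set ProbabilityTheory

/-- The Gaussian variance mixture `ν(A) = ∫_1^∞ N(0, s Iₙ)(A) l^θ_ρ(s) ds` on `ℝⁿ`:
the mixing measure is Lebesgue measure with density `l^θ_ρ` (which vanishes off `(1,∞)`),
and `N(0, s Iₙ)` is the `n`-fold product of the centered Gaussian with variance `s`. -/
noncomputable def greyMixture (ρ θ : ℝ) (n : ℕ) : Measure (Fin n → ℝ) :=
  ((volume : Measure ℝ).withDensity fun s => ENNReal.ofReal (lDens ρ θ s)).bind
    fun s => Measure.pi fun _ : Fin n => gaussianReal 0 s.toNNReal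


lemma shift_lint (f : ℝ → ENNReal) :
    ∫⁻ y in Ioi (1:ℝ), f y = ∫⁻ t in Ioi (0:ℝ), f (t + 1) := by
  rw [← lintegral_indicator measurableSet_Ioi, ← lintegral_indicator measurableSet_Ioi,
    ← lintegral_add_right_eq_self _ (1:ℝ)]
  congr 1
  ext t
  simp [indicator]

lemma uGamma_integrable (ρ a : ℝ) (hρ : 0 < ρ) (ha : 0 < a) :
    IntegrableOn (fun w => Real.exp (-w) * w ^ (ρ - 1)) (Ioi a) :=
  (Real.GammaIntegral_convergent hρ).mono_set (Ioi_subset_Ioi ha.le)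

lemma uGamma_pos (ρ a : ℝ) (hρ : 0 < ρ) (ha : 0 < a) : 0 < uGamma ρ a := by
  unfold uGamma
  have hp : ∀ w ∈ Ioi a, 0 < Real.exp (-w) * w ^ (ρ - 1) := fun w hw =>
    mul_pos (Real.exp_pos _) (Real.rpow_pos_of_pos (ha.trans hw) _)
  rw [setIntegral_pos_iff_support_of_nonneg_ae _ (uGamma_integrable ρ a hρ ha)]
  · have : Function.support (fun w => Real.exp (-w) * w ^ (ρ - 1)) ∩ Ioi a = Ioi a := by
      ext w
      simp only [mem_inter_iff, Function.mem_support, and_iff_right_iff_imp]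
      exact fun hw => (hp w hw).ne'
    rw [this]; simp
  · exact (ae_restrict_iff' measurableSet_Ioi).2 (ae_of_all _ fun w hw => (hp w hw).le)

lemma lint_exp (y a : ℝ) (hy : 0 < y) :
    ∫⁻ w in Ioi a, ENNReal.ofReal (Real.exp (-(w * y))) = ENNReal.ofReal (Real.exp (-(a * y)) / y) := by
  have h := integral_exp_mul_Ioi (a := -y) (by linarith) a
  have hi : IntegrableOn (fun w => Real.exp (-y * w)) (Ioi a) :=
    integrableOn_exp_mul_Ioi (by linarith) a
  have e : ∀ w, -(w * y) = -y * w := fun w => by ring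
  simp_rw [e]
  rw [← ofReal_integral_eq_lintegral_ofReal hi (ae_of_all _ fun w => (Real.exp_pos _).le), h]
  congr 1
  rw [neg_div_neg_eq]

lemma lint_gamma (ρ w : ℝ) (hρ : ρ < 1) (hw : 0 < w) :
    ∫⁻ t in Ioi (0:ℝ), ENNReal.ofReal (t ^ (-ρ) * Real.exp (-(w * (t + 1))))
      = ENNReal.ofReal (Real.exp (-w) * w ^ (ρ - 1) * Real.Gamma (1 - ρ)) := by
  have h := Real.integral_rpow_mul_exp_neg_mul_Ioi (a := 1 - ρ) (r := w) (by linarith) hw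
  have hG : 0 < Real.Gamma (1 - ρ) := Real.Gamma_pos_of_pos (by linarith)
  have hi : IntegrableOn (fun x : ℝ ↦ x ^ ((1 - ρ) - 1) * rexp (-(w * x))) (Ioi 0) :=
    .of_integral_ne_zero (by rw [h]; positivity)
  have e : ∀ t : ℝ, t ^ (-ρ) * Real.exp (-(w * (t + 1)))
      = Real.exp (-w) * (t ^ ((1 - ρ) - 1) * rexp (-(w * t))) := fun t => by
    rw [show (1 - ρ) - 1 = -ρ by ring, show -(w * (t + 1)) = -w + -(w * t) by ring, Real.exp_add]
    ring
  simp_rw [e]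
  rw [← ofReal_integral_eq_lintegral_ofReal (hi.const_mul _), integral_const_mul, h]
  · congr 1
    rw [one_div, Real.inv_rpow hw.le, ← Real.rpow_neg hw.le, neg_sub]; ring
  · refine (ae_restrict_iff' measurableSet_Ioi).2 (ae_of_all _ fun t ht => ?_)
    have : (0:ℝ) < t := ht
    simp only [Pi.zero_apply]; positivity

lemma lint_key (ρ a : ℝ) (hρ : ρ ∈ Ioo (0:ℝ) 1) (ha : 0 < a) :
    ∫⁻ y in Ioi (1:ℝ), ENNReal.ofReal (Real.exp (-a * y) / (y * (y - 1) ^ ρ))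
      = ENNReal.ofReal (uGamma ρ a * Real.Gamma (1 - ρ)) := by
  have hG : 0 < Real.Gamma (1 - ρ) := Real.Gamma_pos_of_pos (by linarith [hρ.2])
  rw [shift_lint, uGamma, ← integral_mul_const,
    ofReal_integral_eq_lintegral_ofReal ((uGamma_integrable ρ a hρ.1 ha).mul_const _)]
  · rw [← setLIntegral_congr_fun measurableSet_Ioi
      (fun w hw => lint_gamma ρ w hρ.2 (ha.trans hw)), lintegral_lintegral_swap]
    · refine setLIntegral_congr_fun measurableSet_Ioi (fun t ht => ?_)
      have ht : (0:ℝ) < t := ht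
      have hr : (0:ℝ) ≤ t ^ (-ρ) := by positivity
      simp_rw [ENNReal.ofReal_mul hr]
      rw [lintegral_const_mul _ (by fun_prop), lint_exp _ _ (by linarith), ← ENNReal.ofReal_mul hr]
      congr 1
      rw [Real.rpow_neg ht.le]
      simp only [add_sub_cancel_right]
      have : 0 < t ^ ρ := by positivity
      field_simp
    · apply Measurable.aemeasurable
      unfold Function.uncurry
      fun_prop
  · refine (ae_restrict_iff' measurableSet_Ioi).2 (ae_of_all _ fun t ht => ?_)
    have : (0:ℝ) < t := ha.trans ht
    simp only [Pi.zero_apply]; positivity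

lemma meas_kernel (n : ℕ) :
    Measurable fun s : ℝ => Measure.pi fun _ : Fin n => gaussianReal 0 s.toNNReal := by
  have e : ∀ s : ℝ, (Measure.pi fun _ : Fin n => gaussianReal 0 s.toNNReal)
      = (Measure.pi fun _ : Fin n => gaussianReal 0 1).map (fun x i => √s * x i) := fun s => by
    have hm : (gaussianReal 0 1).map (fun x => √s * x) = gaussianReal 0 s.toNNReal := by
      rw [gaussianReal_map_const_mul]
      congr 1
      · simp
      · ext; simp [Real.sq_sqrt', Real.coe_toNNReal']
    rw [Measure.pi_map_pi (f := fun _ x => √s * x) (fun _ => by fun_prop)]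
    simp_rw [hm]
  simp_rw [e]
  refine Measure.measurable_of_measurable_coe _ fun A hA => ?_
  have hf : Measurable (fun p : ℝ × (Fin n → ℝ) => fun i => √p.1 * p.2 i) := by fun_prop
  have := measurable_measure_prodMk_left (ν := Measure.pi fun _ : Fin n => gaussianReal 0 1) (hf hA)
  convert this using 2 with s
  rw [Measure.map_apply (by fun_prop) hA]
  rfl

lemma charfun_pi (n : ℕ) (s : ℝ) (hs : 0 ≤ s) (ξ : Fin n → ℝ) :
    ∫ x, Complex.exp (Complex.I * ((∑ i, ξ i * x i : ℝ) : ℂ))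
      ∂(Measure.pi fun _ : Fin n => gaussianReal 0 s.toNNReal)
      = ((Real.exp (-((∑ i, ξ i * ξ i) / 2) * s) : ℝ) : ℂ) := by
  have e : ∀ x : Fin n → ℝ, Complex.exp (Complex.I * ((∑ i, ξ i * x i : ℝ) : ℂ))
      = ∏ i, Complex.exp (ξ i * x i * Complex.I) := fun x => by
    rw [← Complex.exp_sum]; push_cast; rw [Finset.mul_sum]
    congr 1; exact Finset.sum_congr rfl fun i _ => by ring
  simp_rw [e]
  rw [integral_fintype_prod_eq_prod (fun i (y : ℝ) => Complex.exp (ξ i * y * Complex.I))]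
  simp_rw [← charFun_apply_real, charFun_gaussianReal]
  rw [← Complex.exp_sum]
  push_cast
  rw [Real.coe_toNNReal s hs]
  congr 1
  rw [neg_mul, div_mul_eq_mul_div, Finset.sum_mul, Finset.sum_div, ← Finset.sum_neg_distrib]
  exact Finset.sum_congr rfl fun i _ => by ring

lemma lDens_meas (ρ θ : ℝ) : Measurable (lDens ρ θ) := by
  unfold lDens
  exact Measurable.ite measurableSet_Ioi (by fun_prop) (by fun_prop)

lemma lDens_mul (ρ θ b : ℝ) (hρ : ρ ∈ Ioo (0:ℝ) 1) (hθ : 0 < θ) (hb : 0 ≤ b) :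
    ∫⁻ y, ENNReal.ofReal (lDens ρ θ y * Real.exp (-b * y))
      = ENNReal.ofReal (uGamma ρ (θ + b) / uGamma ρ θ) := by
  have hG : 0 < Real.Gamma (1 - ρ) := Real.Gamma_pos_of_pos (by linarith [hρ.2])
  have hu := uGamma_pos ρ θ hρ.1 hθ
  have hc : 0 ≤ (uGamma ρ θ * Real.Gamma (1 - ρ))⁻¹ := by positivity
  have e : (fun y => ENNReal.ofReal (lDens ρ θ y * Real.exp (-b * y)))
      = (Ioi (1:ℝ)).indicator (fun y => ENNReal.ofReal (uGamma ρ θ * Real.Gamma (1 - ρ))⁻¹ *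
        ENNReal.ofReal (Real.exp (-(θ + b) * y) / (y * (y - 1) ^ ρ))) := by
    ext y
    by_cases hy : 1 < y
    · rw [indicator_of_mem (by exact hy), ← ENNReal.ofReal_mul hc]
      congr 1
      rw [lDens, if_pos hy, show -(θ + b) * y = -θ * y + -b * y by ring, Real.exp_add]
      have : 0 < (y - 1) ^ ρ := Real.rpow_pos_of_pos (by linarith) _
      field_simp
    · rw [indicator_of_notMem (by exact hy), lDens, if_neg hy]; simp
  rw [e, lintegral_indicator measurableSet_Ioi, lintegral_const_mul _ (by fun_prop),
    lint_key _ _ hρ (by linarith), ← ENNReal.ofReal_mul hc]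
  congr 1
  field_simp

lemma lDens_nonneg (ρ θ : ℝ) (hρ : ρ ∈ Ioo (0:ℝ) 1) (hθ : 0 < θ) (y : ℝ) : 0 ≤ lDens ρ θ y := by
  have hG : 0 < Real.Gamma (1 - ρ) := Real.Gamma_pos_of_pos (by linarith [hρ.2])
  have hu := uGamma_pos ρ θ hρ.1 hθ
  unfold lDens
  split_ifs with hy
  · have : 0 < (y - 1) ^ ρ := Real.rpow_pos_of_pos (by linarith) _
    positivity
  · exact le_rfl

theorem stmt_7 (n : ℕ) (ρ θ : ℝ) (hρ : ρ ∈ Set.Ioo (0 : ℝ) 1) (hθ : 0 < θ) :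
    ∃ ν : Measure (Fin n → ℝ), IsProbabilityMeasure ν ∧
      ν = greyMixture ρ θ n ∧
      ∀ ξ : Fin n → ℝ,
        ∫ x, Complex.exp (Complex.I * ((∑ i, ξ i * x i : ℝ) : ℂ)) ∂ν
          = ((uGamma ρ (θ + (∑ i, ξ i * ξ i) / 2) / uGamma ρ θ : ℝ) : ℂ) := by
  have hu := uGamma_pos ρ θ hρ.1 hθ
  have hk := meas_kernel n
  have hlm := lDens_meas ρ θ
  set m : Measure ℝ := (volume : Measure ℝ).withDensity fun s => ENNReal.ofReal (lDens ρ θ s) with hm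
  have hm1 : IsProbabilityMeasure m := by
    constructor
    have := lDens_mul ρ θ 0 hρ hθ le_rfl
    simp only [neg_zero, zero_mul, Real.exp_zero, mul_one, add_zero, div_self hu.ne',
      ENNReal.ofReal_one] at this
    rw [hm, withDensity_apply _ MeasurableSet.univ, Measure.restrict_univ, this]
  let κ : Kernel ℝ (Fin n → ℝ) := ⟨_, hk⟩
  have hκ : IsMarkovKernel κ := ⟨fun s => by
    change IsProbabilityMeasure (Measure.pi fun _ : Fin n => gaussianReal 0 s.toNNReal)
    infer_instance⟩
  have hg : greyMixture ρ θ n = m.bind κ := rfl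
  have hp : IsProbabilityMeasure (m.bind κ) := inferInstance
  refine ⟨greyMixture ρ θ n, by rw [hg]; exact hp, rfl, fun ξ => ?_⟩
  set b := (∑ i, ξ i * ξ i) / 2 with hb
  have hb0 : 0 ≤ b := by
    have : 0 ≤ ∑ i, ξ i * ξ i := Finset.sum_nonneg fun i _ => mul_self_nonneg _
    positivity
  have hint : Integrable (fun x : Fin n → ℝ =>
      Complex.exp (Complex.I * ((∑ i, ξ i * x i : ℝ) : ℂ))) (m.bind κ) := by
    refine Integrable.of_bound (C := 1) (by
      apply Measurable.aestronglyMeasurable; fun_prop) (ae_of_all _ fun x => ?_)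
    rw [mul_comm, Complex.norm_exp_ofReal_mul_I]
  have hcomp : (κ ∘ₖ Kernel.const Unit m) () = m.bind κ := by
    rw [Kernel.comp_apply, Kernel.const_apply]
  have hic := Kernel.integral_comp (κ := Kernel.const Unit m) (η := κ) (a := ())
    (by rw [hcomp]; exact hint)
  rw [hcomp, Kernel.const_apply] at hic
  rw [hg, hic, hm, integral_withDensity_eq_integral_toReal_smul (by fun_prop)
    (ae_of_all _ fun _ => ENNReal.ofReal_lt_top)]
  · have e : ∀ s : ℝ, (ENNReal.ofReal (lDens ρ θ s)).toReal •
        ∫ x, Complex.exp (Complex.I * ((∑ i, ξ i * x i : ℝ) : ℂ)) ∂(κ s)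
        = ((lDens ρ θ s * Real.exp (-b * s) : ℝ) : ℂ) := fun s => by
      rw [ENNReal.toReal_ofReal (lDens_nonneg ρ θ hρ hθ s)]
      by_cases hs : 1 < s
      · have := charfun_pi n s (by linarith) ξ
        rw [← hb] at this
        change _ • (∫ x, Complex.exp (Complex.I * ((∑ i, ξ i * x i : ℝ) : ℂ))
          ∂(Measure.pi fun _ : Fin n => gaussianReal 0 s.toNNReal)) = _
        rw [this, Complex.real_smul, ← Complex.ofReal_mul]
      · simp [lDens, if_neg hs]
    simp_rw [e]
    rw [integral_complex_ofReal]
    congr 1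
    rw [integral_eq_lintegral_of_nonneg_ae, lDens_mul ρ θ b hρ hθ hb0, ENNReal.toReal_ofReal]
    · exact (div_pos (uGamma_pos ρ _ hρ.1 (by linarith)) hu).le
    · exact ae_of_all _ fun s => mul_nonneg (lDens_nonneg ρ θ hρ hθ s) (Real.exp_pos _).le
    · exact (by fun_prop : Measurable _).aestronglyMeasurable
end

section
/- Let ρ ∈ (0,1), θ > 0, λ ∈ ℝ with λ ≠ 0, let ν be a Γ-grey noise measure on S' with parameters ρ, θ, and let φ ∈ S satisfy λ²‖φ‖² < 2θ. Then the function ω ↦ e^{|λ⟨ω,φ⟩|} is ν-integrable on S', and ∫_{S'} e^{λ⟨ω,φ⟩} dν(ω) = Γ(ρ, θ - (λ²/2)‖φ‖²)/Γ(ρ,θ). -/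
open MeasureTheory Real Set SchwartzMap

/-- The space `S'`: the topological dual of the Schwartz space `S(ℝ)`,
equipped with the weak-* topology. -/
abbrev SchwartzDual := WeakDual ℝ (SchwartzMap ℝ ℝ)

/-- Borel σ-algebra on `S'` (Borel σ-algebra of the weak-* topology). -/
noncomputable instance : MeasurableSpace SchwartzDual := borel _

instance : BorelSpace SchwartzDual := ⟨rfl⟩

open ProbabilityTheory

lemma uG_intble {ρ x : ℝ} (hρ : 0 < ρ) (hx : 0 < x) :
    IntegrableOn (fun w => Real.exp (-w) * w ^ (ρ - 1)) (Set.Ioi x) :=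
  (Real.GammaIntegral_convergent hρ).mono_set (Set.Ioi_subset_Ioi hx.le)

lemma uG_pos_s9 {ρ x : ℝ} (hρ : 0 < ρ) (hx : 0 < x) : 0 < uGamma ρ x := by
  unfold uGamma
  rw [setIntegral_pos_iff_support_of_nonneg_ae _ (uG_intble hρ hx)]
  · have : (Function.support fun w => Real.exp (-w) * w ^ (ρ - 1)) ∩ Set.Ioi x = Set.Ioi x := by
      apply Set.inter_eq_right.2
      intro w hw
      have : 0 < w := hx.trans hw
      simp only [Function.mem_support]
      positivity
    rw [this]; simp
  · filter_upwards [ae_restrict_mem measurableSet_Ioi] with w hw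
    have : 0 < w := hx.trans hw
    simp only [Pi.zero_apply]
    positivity

lemma uG_lint {ρ x : ℝ} (hρ : 0 < ρ) (hx : 0 < x) :
    ∫⁻ w in Set.Ioi x, ENNReal.ofReal (Real.exp (-w) * w ^ (ρ - 1))
      = ENNReal.ofReal (uGamma ρ x) := by
  unfold uGamma
  rw [ofReal_integral_eq_lintegral_ofReal (uG_intble hρ hx)]
  filter_upwards [ae_restrict_mem measurableSet_Ioi] with w hw
  have : 0 < w := hx.trans hw
  simp only [Pi.zero_apply]
  positivity

lemma exp_lint {a x : ℝ} (ha : 0 < a) :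
    ∫⁻ w in Set.Ioi x, ENNReal.ofReal (Real.exp (-a * w))
      = ENNReal.ofReal (Real.exp (-a * x) / a) := by
  rw [← ofReal_integral_eq_lintegral_ofReal (integrableOn_exp_mul_Ioi (by linarith) x)
    (Filter.Eventually.of_forall fun w => (Real.exp_pos _).le),
    integral_exp_mul_Ioi (by linarith)]
  congr 1
  rw [neg_div_neg_eq]

lemma pow_lint {ρ w : ℝ} (hρ : ρ < 1) (hw : 0 < w) :
    ∫⁻ τ in Set.Ioi (0 : ℝ), ENNReal.ofReal (τ ^ (-ρ) * Real.exp (-(w * τ)))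
      = ENNReal.ofReal (w ^ (ρ - 1) * Real.Gamma (1 - ρ)) := by
  have h := Real.integral_rpow_mul_exp_neg_mul_Ioi (a := 1 - ρ) (by linarith) hw
  have e : (1 - ρ - 1) = -ρ := by ring
  have e2 : (1 / w) ^ (1 - ρ) = w ^ (ρ - 1) := by
    rw [one_div, Real.inv_rpow hw.le, ← Real.rpow_neg hw.le]; congr 1; ring
  rw [e, e2] at h
  rw [← h, ofReal_integral_eq_lintegral_ofReal]
  · by_contra hc
    rw [integral_undef hc] at h
    have := Real.Gamma_pos_of_pos (show 0 < 1 - ρ by linarith)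
    have : 0 < w ^ (ρ - 1) * Real.Gamma (1 - ρ) := by positivity
    linarith
  · filter_upwards [ae_restrict_mem measurableSet_Ioi] with t ht
    have : 0 < t := ht
    simp only [Pi.zero_apply]
    positivity

lemma laplace_lint {ρ x : ℝ} (hρ : 0 < ρ) (hρ1 : ρ < 1) (hx : 0 < x) :
    ∫⁻ τ in Set.Ioi (0 : ℝ), ENNReal.ofReal (τ ^ (-ρ) * (Real.exp (-(1 + τ) * x) / (1 + τ)))
      = ENNReal.ofReal (Real.Gamma (1 - ρ) * uGamma ρ x) := by
  have hG := Real.Gamma_pos_of_pos (show 0 < 1 - ρ by linarith)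
  calc _ = ∫⁻ τ in Set.Ioi (0 : ℝ), ∫⁻ w in Set.Ioi x,
        ENNReal.ofReal (τ ^ (-ρ)) * ENNReal.ofReal (Real.exp (-(1 + τ) * w)) := by
        apply setLIntegral_congr_fun measurableSet_Ioi
        intro τ hτ
        have : 0 < τ := hτ
        simp only
        rw [lintegral_const_mul _ (by fun_prop), exp_lint (by linarith),
          ENNReal.ofReal_mul (by positivity)]
    _ = ∫⁻ w in Set.Ioi x, ∫⁻ τ in Set.Ioi (0 : ℝ),
        ENNReal.ofReal (τ ^ (-ρ)) * ENNReal.ofReal (Real.exp (-(1 + τ) * w)) := by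
        apply lintegral_lintegral_swap
        apply Measurable.aemeasurable
        unfold Function.uncurry
        fun_prop
    _ = ∫⁻ w in Set.Ioi x, ENNReal.ofReal (Real.Gamma (1 - ρ)) *
          ENNReal.ofReal (Real.exp (-w) * w ^ (ρ - 1)) := by
        apply setLIntegral_congr_fun measurableSet_Ioi
        intro w hw
        have hw0 : 0 < w := hx.trans hw
        simp only
        rw [← ENNReal.ofReal_mul hG.le,
          show Real.Gamma (1 - ρ) * (Real.exp (-w) * w ^ (ρ - 1))
            = Real.exp (-w) * (w ^ (ρ - 1) * Real.Gamma (1 - ρ)) by ring,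
          ENNReal.ofReal_mul (Real.exp_pos _).le, ← pow_lint hρ1 hw0,
          ← lintegral_const_mul _ (by fun_prop)]
        apply setLIntegral_congr_fun measurableSet_Ioi
        intro τ hτ
        have : 0 < τ := hτ
        simp only
        rw [← ENNReal.ofReal_mul (by positivity), ← ENNReal.ofReal_mul (by positivity)]
        congr 1
        rw [show -(1 + τ) * w = -w + -(w * τ) by ring, Real.exp_add]; ring
    _ = _ := by
        rw [lintegral_const_mul _ (by fun_prop), uG_lint hρ hx, ENNReal.ofReal_mul hG.le]

/-- The mixing measure. -/
noncomputable def mixM (ρ θ : ℝ) : Measure ℝ :=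
  (volume.restrict (Set.Ioi (0 : ℝ))).withDensity fun τ =>
    ENNReal.ofReal (τ ^ (-ρ) * (Real.exp (-(1 + τ) * θ) / (1 + τ))) *
      ENNReal.ofReal (Real.Gamma (1 - ρ) * uGamma ρ θ)⁻¹

lemma mixM_pos (ρ θ : ℝ) : ∀ᵐ τ ∂(mixM ρ θ), 0 < τ := by
  apply (withDensity_absolutelyContinuous _ _).ae_le
  exact ae_restrict_mem measurableSet_Ioi

lemma mixM_lint {ρ θ c : ℝ} (hρ : 0 < ρ) (hρ1 : ρ < 1) (hθ : 0 < θ) (hc : c < θ) :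
    ∫⁻ τ, ENNReal.ofReal (Real.exp (c * (1 + τ))) ∂(mixM ρ θ)
      = ENNReal.ofReal (uGamma ρ (θ - c) / uGamma ρ θ) := by
  have hG := Real.Gamma_pos_of_pos (show 0 < 1 - ρ by linarith)
  have hU := uG_pos_s9 hρ hθ
  unfold mixM
  rw [lintegral_withDensity_eq_lintegral_mul _ (by fun_prop) (by fun_prop)]
  have : uGamma ρ (θ - c) / uGamma ρ θ = (Real.Gamma (1 - ρ) * uGamma ρ (θ - c)) *
      (Real.Gamma (1 - ρ) * uGamma ρ θ)⁻¹ := by field_simp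
  rw [this, ENNReal.ofReal_mul' (by positivity), ← laplace_lint hρ hρ1 (by linarith),
    ← lintegral_mul_const _ (by fun_prop)]
  apply setLIntegral_congr_fun measurableSet_Ioi
  intro τ hτ
  have : 0 < τ := hτ
  simp only [Pi.mul_apply]
  rw [mul_right_comm, ← ENNReal.ofReal_mul (by positivity)]
  congr 2
  rw [show -(1 + τ) * (θ - c) = -(1 + τ) * θ + c * (1 + τ) by ring, Real.exp_add]; ring

lemma mixM_prob {ρ θ : ℝ} (hρ : 0 < ρ) (hρ1 : ρ < 1) (hθ : 0 < θ) :
    IsProbabilityMeasure (mixM ρ θ) := by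
  have := mixM_lint hρ hρ1 hθ hθ
  have hU := uG_pos_s9 hρ hθ
  simp [div_self hU.ne'] at this
  exact ⟨this⟩

lemma mixM_int {ρ θ c : ℝ} (hρ : 0 < ρ) (hρ1 : ρ < 1) (hθ : 0 < θ) (hc : c < θ) :
    ∫ τ, Real.exp (c * (1 + τ)) ∂(mixM ρ θ) = uGamma ρ (θ - c) / uGamma ρ θ := by
  have hU := uG_pos_s9 hρ hθ
  have hU2 := uG_pos_s9 hρ (x := θ - c) (by linarith)
  rw [integral_eq_lintegral_of_nonneg_ae (Filter.Eventually.of_forall fun w => (Real.exp_pos _).le)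
    (by fun_prop), mixM_lint hρ hρ1 hθ hc, ENNReal.toReal_ofReal (by positivity)]

lemma law_eq {ρ θ s : ℝ} (hρ : 0 < ρ) (hρ1 : ρ < 1) (hθ : 0 < θ) (hs : 0 ≤ s)
    (P : Measure ℝ) [IsProbabilityMeasure P]
    (hP : ∀ t : ℝ, charFun P t = ((uGamma ρ (θ + t ^ 2 * s / 2) / uGamma ρ θ : ℝ) : ℂ)) :
    P = ((mixM ρ θ).prod (gaussianReal 0 1)).map fun p => √(s * (1 + p.1)) * p.2 := by
  have := mixM_prob hρ hρ1 hθ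
  have hm : Measurable (fun p : ℝ × ℝ => √(s * (1 + p.1)) * p.2) := by fun_prop
  have := Measure.isProbabilityMeasure_map (μ := (mixM ρ θ).prod (gaussianReal 0 1)) hm.aemeasurable
  apply Measure.ext_of_charFun
  funext t
  rw [hP, charFun_apply_real, integral_map hm.aemeasurable (by fun_prop), integral_prod]
  · rw [show θ + t ^ 2 * s / 2 = θ - (-(t ^ 2 * s / 2)) by ring, ← mixM_int hρ hρ1 hθ
      (by have : 0 ≤ t ^ 2 * s / 2 := by positivity
          linarith), ← integral_complex_ofReal]
    apply integral_congr_ae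
    filter_upwards [mixM_pos ρ θ] with τ hτ
    have h := charFun_gaussianReal (μ := 0) (v := 1) (t * √(s * (1 + τ)))
    rw [charFun_apply_real] at h
    have h2 : (∫ y : ℝ, Complex.exp (t * ((√(s * (1 + τ)) * y : ℝ) : ℂ) * Complex.I) ∂(gaussianReal 0 1))
       = ∫ y : ℝ, Complex.exp (((t * √(s * (1 + τ)) : ℝ) : ℂ) * y * Complex.I) ∂(gaussianReal 0 1) := by
      congr 1; funext y; congr 1; push_cast; ring
    rw [h2, h, Complex.ofReal_exp]
    congr 1
    have h3 : √(s * (1 + τ)) ^ 2 = s * (1 + τ) := Real.sq_sqrt (by positivity)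
    have h4 : ((√(s * (1 + τ)) : ℝ) : ℂ) ^ 2 = s * (1 + τ) := by exact_mod_cast h3
    push_cast
    rw [mul_pow, h4]
    simp; ring
  · apply Integrable.of_bound (C := 1) (by fun_prop)
    refine Filter.Eventually.of_forall fun p => ?_
    rw [← Complex.ofReal_mul, Complex.norm_exp_ofReal_mul_I]

lemma law_exp {ρ θ s : ℝ} (hρ : 0 < ρ) (hρ1 : ρ < 1) (hθ : 0 < θ) (hs : 0 ≤ s)
    (P : Measure ℝ) [IsProbabilityMeasure P]
    (hP : ∀ t : ℝ, charFun P t = ((uGamma ρ (θ + t ^ 2 * s / 2) / uGamma ρ θ : ℝ) : ℂ))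
    (t : ℝ) (ht : t ^ 2 * s < 2 * θ) :
    ∫⁻ x, ENNReal.ofReal (Real.exp (t * x)) ∂P
      = ENNReal.ofReal (uGamma ρ (θ - t ^ 2 / 2 * s) / uGamma ρ θ) := by
  have := mixM_prob hρ hρ1 hθ
  rw [law_eq hρ hρ1 hθ hs P hP, lintegral_map (by fun_prop) (by fun_prop),
    lintegral_prod _ (by fun_prop), ← mixM_lint hρ hρ1 hθ (by linarith)]
  apply lintegral_congr_ae
  filter_upwards [mixM_pos ρ θ] with τ hτ
  have h := congrFun (mgf_id_gaussianReal (μ := 0) (v := 1)) (t * √(s * (1 + τ)))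
  have hi := integrable_exp_mul_gaussianReal (μ := 0) (v := 1) (t * √(s * (1 + τ)))
  simp only [mgf, id] at h
  simp only [← mul_assoc]
  rw [← ofReal_integral_eq_lintegral_ofReal hi
    (Filter.Eventually.of_forall fun w => (Real.exp_pos _).le), h]
  congr 2
  rw [mul_pow, Real.sq_sqrt (by positivity)]
  simp; ring

theorem stmt_9 (ρ θ lam : ℝ) (hρ : ρ ∈ Set.Ioo (0 : ℝ) 1) (hθ : 0 < θ) (hlam : lam ≠ 0)
    (ν : Measure SchwartzDual) [IsProbabilityMeasure ν]
    (hchar : ∀ ξ : SchwartzMap ℝ ℝ,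
        ∫ ω, Complex.exp (Complex.I * ((ω ξ : ℝ) : ℂ)) ∂ν
          = ((uGamma ρ (θ + (∫ x, ξ x * ξ x) / 2) / uGamma ρ θ : ℝ) : ℂ))
    (φ : SchwartzMap ℝ ℝ) (hφ : lam ^ 2 * ∫ x, φ x * φ x < 2 * θ) :
    Integrable (fun ω : SchwartzDual => Real.exp |lam * ω φ|) ν ∧
    ∫ ω, Real.exp (lam * ω φ) ∂ν
      = uGamma ρ (θ - lam ^ 2 / 2 * ∫ x, φ x * φ x) / uGamma ρ θ := by
  obtain ⟨hρ0, hρ1⟩ := hρ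
  have hX : Measurable (fun ω : SchwartzDual => ω φ) := (WeakDual.eval_continuous φ).measurable
  set s := ∫ x, φ x * φ x with hs
  have hs0 : 0 ≤ s := integral_nonneg fun x => mul_self_nonneg _
  have := Measure.isProbabilityMeasure_map (μ := ν) hX.aemeasurable
  have hP : ∀ t : ℝ, charFun (ν.map fun ω : SchwartzDual => ω φ) t
      = ((uGamma ρ (θ + t ^ 2 * s / 2) / uGamma ρ θ : ℝ) : ℂ) := by
    intro t
    have h := hchar (t • φ)
    have e : (∫ x, (t • φ) x * (t • φ) x) = t ^ 2 * s := by
      rw [hs, ← integral_const_mul]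
      congr 1; funext x
      simp only [_root_.smul_apply, smul_eq_mul]; ring
    rw [e] at h
    rw [← h, charFun_apply_real, integral_map hX.aemeasurable (by fun_prop)]
    congr 1; funext ω; congr 1
    rw [map_smul, smul_eq_mul]; push_cast; ring
  have key : ∀ t : ℝ, t ^ 2 * s < 2 * θ →
      ∫⁻ ω, ENNReal.ofReal (Real.exp (t * ω φ)) ∂ν
        = ENNReal.ofReal (uGamma ρ (θ - t ^ 2 / 2 * s) / uGamma ρ θ) := by
    intro t ht
    rw [← law_exp hρ0 hρ1 hθ hs0 _ hP t ht, lintegral_map (by fun_prop) hX]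
  have hint : ∀ t : ℝ, t ^ 2 * s < 2 * θ →
      Integrable (fun ω : SchwartzDual => Real.exp (t * ω φ)) ν := by
    intro t ht
    refine ⟨(Real.measurable_exp.comp (hX.const_mul t)).aestronglyMeasurable, ?_⟩
    rw [hasFiniteIntegral_iff_ofReal (Filter.Eventually.of_forall fun w => (Real.exp_pos _).le),
      key t ht]
    exact ENNReal.ofReal_lt_top
  refine ⟨?_, ?_⟩
  · refine ((hint lam hφ).add (hint (-lam) (by rwa [neg_sq]))).mono'
      (Real.measurable_exp.comp (hX.const_mul lam).abs).aestronglyMeasurable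
      (Filter.Eventually.of_forall fun ω => ?_)
    rw [Real.norm_of_nonneg (Real.exp_pos _).le]
    simp only [Pi.add_apply, neg_mul]
    exact Real.exp_abs_le _
  · have hU := uG_pos_s9 hρ0 hθ
    have hU2 := uG_pos_s9 hρ0 (x := θ - lam ^ 2 / 2 * s) (by linarith)
    rw [integral_eq_lintegral_of_nonneg_ae
      (Filter.Eventually.of_forall fun w => (Real.exp_pos _).le) (hint lam hφ).1,
      key lam hφ, ENNReal.toReal_ofReal (by positivity)]
end

section
/- Let ρ ∈ (0,1], θ > 0, and let ν be a Γ-grey noise measure on S' with parameters ρ, θ. Then for every ξ ∈ S and n ∈ ℕ: ∫_{S'} ⟨ω,ξ⟩^{2n+1} dν(ω) = 0, and for every integer n ≥ 1, ∫_{S'} ⟨ω,ξ⟩^{2n} dν(ω) = (-1)^{n+1} (2n)! Γ(ρ) θ^{ρ-n} ‖ξ‖^{2n} E^ρ_{1,ρ+1-n}(-θ) / (n! 2^n Γ(ρ,θ)). -/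
open MeasureTheory Real Set

open Filter Topology in
lemma aux_symm {f f' : ℝ → ℝ} {t f2 : ℝ} (hf : ∀ x, HasDerivAt f (f' x) x)
    (hf' : HasDerivAt f' f2 t) :
    Tendsto (fun h : ℝ => (2 * f t - f (t + h) - f (t - h)) / h ^ 2) (𝓝[>] 0) (𝓝 (-f2)) := by
  have hp : ∀ h : ℝ, HasDerivAt (fun h => f (t + h)) (f' (t + h)) h := fun h => by
    simpa using (hf (t + h)).comp_const_add t h
  have hm : ∀ h : ℝ, HasDerivAt (fun h => f (t - h)) (-f' (t - h)) h := fun h => by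
    simpa using (hf (t - h)).comp_const_sub t h
  have hn : ∀ h : ℝ, HasDerivAt (fun h => 2 * f t - f (t + h) - f (t - h))
      (f' (t - h) - f' (t + h)) h := fun h => by
    exact (((hasDerivAt_const h (2 * f t)).sub (hp h)).sub (hm h)).congr_deriv (by ring)
  have hd : ∀ h : ℝ, HasDerivAt (fun h : ℝ => h ^ 2) (2 * h) h := fun h => by
    simpa using hasDerivAt_pow 2 h
  refine HasDerivAt.lhopital_zero_nhdsGT (Eventually.of_forall hn) (Eventually.of_forall hd) ?_ ?_ ?_ ?_
  · filter_upwards [self_mem_nhdsWithin] with x hx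
    have : (0:ℝ) < x := hx
    positivity
  · have := (hn 0).continuousAt.tendsto
    simp only [add_zero, sub_zero] at this
    have h0 : 2 * f t - f t - f t = 0 := by ring
    rw [h0] at this
    exact this.mono_left nhdsWithin_le_nhds
  · have := (hd 0).continuousAt.tendsto
    simp only [ne_eq, OfNat.ofNat_ne_zero, not_false_eq_true, zero_pow] at this
    exact this.mono_left nhdsWithin_le_nhds
  · have hp' : HasDerivAt (fun h => f' (t + h)) f2 0 := by
      have : HasDerivAt f' f2 (t + 0) := by simpa using hf'
      simpa using this.comp_const_add t 0
    have hm' : HasDerivAt (fun h => f' (t - h)) (-f2) 0 := by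
      have : HasDerivAt f' f2 (t - 0) := by simpa using hf'
      simpa using this.comp_const_sub t 0
    have := ((hm'.sub hp').tendsto_slope).mono_left
      (nhdsWithin_mono (0:ℝ) (s := Ioi 0) (t := {0}ᶜ) (fun x hx => ne_of_gt hx))
    have h2 := this.div_const 2
    have e : (-f2 - f2) / 2 = -f2 := by ring
    rw [e] at h2
    refine h2.congr (fun x => ?_)
    simp only [slope, Pi.sub_apply, vsub_eq_sub, smul_eq_mul, sub_zero, add_zero, sub_self]
    rw [mul_comm 2 x, ← div_div, div_eq_inv_mul (_ - _) x]

open Filter Topology in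
lemma aux_key (μ : Measure ℝ) [IsFiniteMeasure μ] {f f' f2 : ℝ → ℝ}
    (hφ : ∀ t, ∫ x, cos (t * x) ∂μ = f t)
    (hf : ∀ x, HasDerivAt f (f' x) x) (hf' : ∀ x, HasDerivAt f' (f2 x) x) :
    Integrable (fun x : ℝ => x ^ 2) μ ∧ ∀ t, ∫ x, x ^ 2 * cos (t * x) ∂μ = - f2 t := by
  have hc : ∀ t : ℝ, Integrable (fun x => cos (t * x)) μ := fun t => by
    refine Integrable.of_bound (C := 1) (by fun_prop) (ae_of_all _ fun x => ?_)
    exact abs_cos_le_one _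
  let h : ℕ → ℝ := fun n => 1 / ((n:ℝ) + 1)
  have hpos : ∀ n, 0 < h n := fun n => by positivity
  have hlim : Tendsto h atTop (𝓝[>] 0) :=
    tendsto_nhdsWithin_iff.2 ⟨tendsto_one_div_add_atTop_nhds_zero_nat,
      Eventually.of_forall hpos⟩
  let G : ℝ → ℕ → ℝ → ℝ := fun t n x =>
    (2 * cos (t * x) - cos ((t + h n) * x) - cos ((t - h n) * x)) / h n ^ 2
  have hG : ∀ t n x, G t n x = cos (t * x) * (2 * (1 - cos (h n * x)) / h n ^ 2) := by
    intro t n x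
    simp only [G, add_mul, sub_mul, cos_add, cos_sub]
    ring
  have hpt : ∀ t x, Tendsto (fun n => G t n x) atTop (𝓝 (x ^ 2 * cos (t * x))) := by
    intro t x
    have h1 : ∀ y : ℝ, HasDerivAt (fun y => cos (y * x)) (-sin (y * x) * x) y := fun y => by
      simpa using (hasDerivAt_mul_const x (x := y)).cos
    have h2 : HasDerivAt (fun y => -sin (y * x) * x) (-(cos (t * x) * x) * x) t := by
      simpa using ((hasDerivAt_mul_const x (x := t)).sin.neg.mul_const x)
    have := (aux_symm h1 h2).comp hlim
    have e : -(-(cos (t * x) * x) * x) = x ^ 2 * cos (t * x) := by ring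
    rw [e] at this
    exact this
  have hint : ∀ t n, ∫ x, G t n x ∂μ = (2 * f t - f (t + h n) - f (t - h n)) / h n ^ 2 := by
    intro t n
    simp only [G]
    have i1 : Integrable (fun x => 2 * cos (t * x) - cos ((t + h n) * x)) μ :=
      ((hc t).const_mul 2).sub (hc _)
    rw [integral_div, integral_sub i1 (hc _),
      integral_sub ((hc t).const_mul 2) (hc _), integral_const_mul, hφ, hφ, hφ]
  have hlimI : ∀ t, Tendsto (fun n => ∫ x, G t n x ∂μ) atTop (𝓝 (- f2 t)) := by
    intro t
    simp only [hint]
    exact (aux_symm hf (hf' t)).comp hlim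
  have hGint : ∀ t n, Integrable (G t n) μ := fun t n =>
    ((((hc t).const_mul 2).sub (hc _)).sub (hc _)).div_const _
  have hI : Integrable (fun x : ℝ => x ^ 2) μ := by
    refine integrable_of_tendsto (G := G 0) (ae_of_all _ fun x => ?_)
      (fun n => (hGint 0 n).aestronglyMeasurable) ?_
    · simpa using hpt 0 x
    · have e : ∀ n, ∫⁻ x, ‖G 0 n x‖ₑ ∂μ = ENNReal.ofReal (∫ x, G 0 n x ∂μ) := by
        intro n
        rw [← ofReal_integral_norm_eq_lintegral_enorm (hGint 0 n)]
        congr 1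
        refine integral_congr_ae (ae_of_all _ fun x => ?_)
        simp only
        rw [Real.norm_of_nonneg]
        rw [hG]
        have := cos_le_one (h n * x)
        have : 0 ≤ 1 - cos (h n * x) := by linarith
        simp only [zero_mul, cos_zero, one_mul]
        positivity
      simp only [e]
      have hl : Tendsto (fun n => ENNReal.ofReal (∫ x, G 0 n x ∂μ)) atTop
          (𝓝 (ENNReal.ofReal (- f2 0))) := (ENNReal.continuous_ofReal.tendsto _).comp (hlimI 0)
      rw [hl.liminf_eq]
      exact ENNReal.ofReal_ne_top
  refine ⟨hI, fun t => ?_⟩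
  refine tendsto_nhds_unique ?_ (hlimI t)
  refine tendsto_integral_filter_of_dominated_convergence (fun x => x ^ 2)
    (Eventually.of_forall fun n => (hGint t n).aestronglyMeasurable)
    (Eventually.of_forall fun n => ae_of_all _ fun x => ?_) hI (ae_of_all _ fun x => hpt t x)
  rw [hG, norm_mul]
  have h1 : 0 ≤ 1 - cos (h n * x) := by linarith [cos_le_one (h n * x)]
  have h2 : 2 * (1 - cos (h n * x)) / h n ^ 2 ≤ x ^ 2 := by
    have := hpos n
    rw [div_le_iff₀ (by positivity)]
    have := one_sub_sq_div_two_le_cos (x := h n * x)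
    nlinarith
  have h3 : ‖2 * (1 - cos (h n * x)) / h n ^ 2‖ ≤ x ^ 2 := by
    rw [Real.norm_of_nonneg (by positivity)]; exact h2
  calc _ ≤ 1 * x ^ 2 := mul_le_mul (abs_cos_le_one _) h3 (norm_nonneg _) zero_le_one
    _ = _ := one_mul _

/-- moments by induction along a chain of derivatives -/
lemma aux_moment (c θ : ℝ) (hc : 0 ≤ c) (hθ : 0 < θ) (n : ℕ) :
    ∀ (μ : Measure ℝ) [IsFiniteMeasure μ] (F : ℕ → ℝ → ℝ),
    (∀ m, ∀ u, -θ < u → HasDerivAt (F m) (F (m + 1) u) u) →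
    (∀ t, ∫ x, cos (t * x) ∂μ = F 0 (c * t ^ 2)) →
    ∫ x, x ^ (2 * n) ∂μ =
      (-1) ^ n * (2 * c) ^ n * (((2 * n).factorial : ℝ) / (n.factorial * 2 ^ n)) * F n 0 := by
  induction n with
  | zero =>
    intro μ _ F _ h
    simpa using h 0
  | succ n ih =>
    intro μ _ F hF h
    have hu : ∀ t : ℝ, -θ < c * t ^ 2 := fun t => by nlinarith [mul_nonneg hc (sq_nonneg t)]
    have hin : ∀ t : ℝ, HasDerivAt (fun t : ℝ => c * t ^ 2) (c * (2 * t)) t := fun t => by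
      simpa using (hasDerivAt_pow 2 t).const_mul c
    have hFc : ∀ m t, HasDerivAt (fun t : ℝ => F m (c * t ^ 2))
        (F (m + 1) (c * t ^ 2) * (c * (2 * t))) t := fun m t =>
      (hF m _ (hu t)).comp t (hin t)
    let L : ℕ → ℝ → ℝ := fun m u =>
      -(2 * c * F (m + 1) u + 4 * c * (u * F (m + 2) u + m * F (m + 1) u))
    have hL : ∀ m, ∀ u, -θ < u → HasDerivAt (L m) (L (m + 1) u) u := by
      intro m u hu
      have := (((hF (m + 1) u hu).const_mul (2 * c)).add
        ((((hasDerivAt_id u).mul (hF (m + 2) u hu)).add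
          ((hF (m + 1) u hu).const_mul (m : ℝ))).const_mul (4 * c))).neg
      refine this.congr_deriv ?_
      simp only [L, id]
      push_cast
      ring
    obtain ⟨hI, hv⟩ := aux_key μ (f := fun t => F 0 (c * t ^ 2))
      (f' := fun t => F 1 (c * t ^ 2) * (c * (2 * t)))
      (f2 := fun t => - L 0 (c * t ^ 2)) h (hFc 0) (by
        intro t
        have := (hFc 1 t).mul (((hasDerivAt_id t).const_mul (2 : ℝ)).const_mul c)
        refine this.congr_deriv ?_
        simp only [L, id]
        push_cast
        ring)
    let d : ℝ → ENNReal := fun x => ENNReal.ofReal (x ^ 2)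
    have hd : Measurable d := by fun_prop
    have hdt : ∀ᵐ x ∂μ, d x < ⊤ := ae_of_all _ fun x => ENNReal.ofReal_lt_top
    have hdr : ∀ x, (d x).toReal = x ^ 2 := fun x => ENNReal.toReal_ofReal (sq_nonneg x)
    have : IsFiniteMeasure (μ.withDensity d) := isFiniteMeasure_withDensity_ofReal hI.2
    have := ih (μ.withDensity d) L hL (by
      intro t
      rw [integral_withDensity_eq_integral_toReal_smul hd hdt]
      simp only [hdr, smul_eq_mul]
      rw [hv]; simp)
    rw [integral_withDensity_eq_integral_toReal_smul hd hdt] at this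
    simp only [hdr, smul_eq_mul] at this
    have e : ∀ x : ℝ, x ^ (2 * (n + 1)) = x ^ 2 * x ^ (2 * n) := fun x => by ring
    simp only [e]
    rw [this]
    simp only [L]
    have f1 : ((2 * (n + 1)).factorial : ℝ) = (2 * n + 2) * (2 * n + 1) * (2 * n).factorial := by
      rw [show 2 * (n + 1) = (2 * n + 1) + 1 by ring, Nat.factorial_succ, Nat.factorial_succ]
      push_cast; ring
    have f2 : ((n + 1).factorial : ℝ) = (n + 1) * n.factorial := by
      rw [Nat.factorial_succ]; push_cast; ring
    rw [f1, f2]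
    have : (n.factorial : ℝ) ≠ 0 := by positivity
    have : (n : ℝ) + 1 ≠ 0 := by positivity
    field_simp
    ring

lemma aux_gamma_inv (s : ℝ) : (Gamma s)⁻¹ = s * (Gamma (s + 1))⁻¹ := by
  rcases eq_or_ne s 0 with rfl | h
  · simp
  · rw [Gamma_add_one h]
    rcases eq_or_ne (Gamma s) 0 with h2 | h2
    · simp [h2]
    · field_simp

/-- coefficient of the n-th derivative -/
noncomputable def auxD (ρ : ℝ) (n j : ℕ) : ℝ :=
  Gamma (ρ + j) * (Gamma (j + (ρ + 1 - n)))⁻¹ * (-1) ^ j / j.factorial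

noncomputable def auxP (ρ : ℝ) (n : ℕ) (x : ℝ) : ℝ := ∑' j : ℕ, auxD ρ n j * x ^ (ρ + j - n)

lemma auxD_succ (ρ : ℝ) (n j : ℕ) : auxD ρ (n + 1) j = auxD ρ n j * (ρ + j - n) := by
  unfold auxD
  rw [aux_gamma_inv]
  have e : (j : ℝ) + (ρ + 1 - ((n + 1 : ℕ) : ℝ)) + 1 = j + (ρ + 1 - n) := by push_cast; ring
  rw [e]
  push_cast
  ring

lemma auxD_one {ρ : ℝ} (hρ : 0 < ρ) (j : ℕ) : auxD ρ 1 j = (-1) ^ j / j.factorial := by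
  unfold auxD
  have e : (j : ℝ) + (ρ + 1 - ((1 : ℕ) : ℝ)) = ρ + j := by push_cast; ring
  rw [e, mul_inv_cancel₀, one_mul]
  exact (Gamma_pos_of_pos (by positivity)).ne'

lemma auxD_summable {ρ : ℝ} (hρ : ρ ∈ Ioc (0:ℝ) 1) (n : ℕ) :
    ∀ R : ℝ, 0 ≤ R → Summable fun j => |auxD ρ (n + 1) j| * R ^ j := by
  induction n with
  | zero =>
    intro R hR
    refine (Real.summable_pow_div_factorial R).congr fun j => ?_
    rw [zero_add, auxD_one hρ.1, abs_div, abs_pow, abs_neg, abs_one, one_pow,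
      abs_of_nonneg (by positivity)]
    ring
  | succ n ih =>
    intro R hR
    refine Summable.of_nonneg_of_le (fun j => by positivity) (fun j => ?_)
      ((ih (2 * R) (by positivity)).mul_left ((n : ℝ) + 2))
    rw [auxD_succ ρ (n + 1), abs_mul, mul_pow]
    have h1 : |ρ + j - ((n + 1 : ℕ) : ℝ)| ≤ (n + 2) * 2 ^ j := by
      have h2 : (j : ℝ) + 1 ≤ 2 ^ j := by
        have : j + 1 ≤ 2 ^ j := Nat.lt_two_pow_self
        exact_mod_cast this
      have hj : (0:ℝ) ≤ j := by positivity
      have hn : (0:ℝ) ≤ n := by positivity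
      have h3 : |ρ + j - ((n + 1 : ℕ) : ℝ)| ≤ (n + 2) * (j + 1) := by
        push_cast
        rw [abs_le]
        constructor <;> nlinarith [hρ.1, hρ.2, mul_nonneg hn hj]
      exact h3.trans (by gcongr)
    calc _ ≤ |auxD ρ (n + 1) j| * ((n + 2) * 2 ^ j) * R ^ j := by gcongr
      _ = _ := by ring

lemma auxP_deriv {ρ : ℝ} (hρ : ρ ∈ Ioc (0:ℝ) 1) (n : ℕ) {x : ℝ} (hx : 0 < x) :
    HasDerivAt (auxP ρ (n + 1)) (auxP ρ (n + 2) x) x := by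
  have key : ∀ (m j : ℕ) (y : ℝ), y ∈ Ioo (x / 2) (2 * x) →
      ‖auxD ρ (m + 1) j * y ^ (ρ + j - ((m + 1 : ℕ) : ℝ))‖ ≤
        (x / 2) ^ (ρ - ((m + 1 : ℕ) : ℝ)) * (|auxD ρ (m + 1) j| * (2 * x) ^ j) := by
    intro m j y hy
    have hx2 : 0 < x / 2 := by positivity
    have hy0 : 0 < y := hx2.trans hy.1
    have e : ρ + j - ((m + 1 : ℕ) : ℝ) = (ρ - ((m + 1 : ℕ) : ℝ)) + j := by ring
    rw [norm_mul, e, rpow_add hy0, rpow_natCast, Real.norm_eq_abs,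
      Real.norm_of_nonneg (by positivity)]
    have h1 : y ^ (ρ - ((m + 1 : ℕ) : ℝ)) ≤ (x / 2) ^ (ρ - ((m + 1 : ℕ) : ℝ)) := by
      refine rpow_le_rpow_of_nonpos hx2 hy.1.le ?_
      push_cast
      have : (0:ℝ) ≤ m := by positivity
      linarith [hρ.2]
    have h2 : y ^ j ≤ (2 * x) ^ j := pow_le_pow_left₀ hy0.le hy.2.le j
    calc _ ≤ |auxD ρ (m + 1) j| * ((x / 2) ^ (ρ - ((m + 1 : ℕ) : ℝ)) * (2 * x) ^ j) := by
          gcongr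
      _ = _ := by ring
  have hxm : x ∈ Ioo (x / 2) (2 * x) := ⟨by linarith, by linarith⟩
  have hs : ∀ m, Summable fun j =>
      (x / 2) ^ (ρ - ((m + 1 : ℕ) : ℝ)) * (|auxD ρ (m + 1) j| * (2 * x) ^ j) := fun m =>
    (auxD_summable hρ m (2 * x) (by positivity)).mul_left _
  refine hasDerivAt_tsum_of_isPreconnected (t := Ioo (x / 2) (2 * x)) (y₀ := x)
    (g' := fun j y => auxD ρ (n + 2) j * y ^ (ρ + j - ((n + 2 : ℕ) : ℝ))) (hs (n + 1)) isOpen_Ioo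
    isPreconnected_Ioo ?_ (fun j y hy => key (n + 1) j y hy) hxm
    (Summable.of_norm_bounded (hs n) (fun j => key n j x hxm)) hxm
  intro j y hy
  have hy0 : 0 < y := lt_trans (by positivity) hy.1
  have := (hasDerivAt_rpow_const (p := ρ + j - ((n + 1 : ℕ) : ℝ)) (Or.inl hy0.ne')).const_mul
    (auxD ρ (n + 1) j)
  refine this.congr_deriv ?_
  rw [auxD_succ ρ (n + 1)]
  have e : ρ + j - ((n + 2 : ℕ) : ℝ) = ρ + j - ((n + 1 : ℕ) : ℝ) - 1 := by push_cast; ring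
  rw [e]
  ring

lemma auxP_one {ρ : ℝ} (hρ : 0 < ρ) {x : ℝ} (hx : 0 < x) :
    auxP ρ 1 x = exp (-x) * x ^ (ρ - 1) := by
  unfold auxP
  have e : ∀ j : ℕ, auxD ρ 1 j * x ^ (ρ + j - ((1 : ℕ) : ℝ)) =
      (-x) ^ j / j.factorial * x ^ (ρ - 1) := by
    intro j
    have e : ρ + j - ((1 : ℕ) : ℝ) = (ρ - 1) + j := by push_cast; ring
    rw [auxD_one hρ, e, rpow_add hx, rpow_natCast, neg_pow x]
    ring
  simp only [e]
  rw [tsum_mul_right, Real.exp_eq_exp_ℝ, NormedSpace.exp_eq_tsum_div]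

lemma uGamma_deriv {ρ : ℝ} (hρ : 0 < ρ) {x : ℝ} (hx : 0 < x) :
    HasDerivAt (uGamma ρ) (-auxP ρ 1 x) x := by
  have hI := GammaIntegral_convergent hρ
  have hcont : ContinuousAt (fun w : ℝ => exp (-w) * w ^ (ρ - 1)) x :=
    (by fun_prop : ContinuousAt (fun w : ℝ => exp (-w)) x).mul
      (continuousAt_rpow_const x _ (Or.inl hx.ne'))
  have hii : IntervalIntegrable (fun w : ℝ => exp (-w) * w ^ (ρ - 1)) volume 0 x :=
    (intervalIntegrable_iff_integrableOn_Ioc_of_le hx.le).2 (hI.mono_set Ioc_subset_Ioi_self)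
  have h := (intervalIntegral.integral_hasDerivAt_right hii
    (by
      refine Measurable.stronglyMeasurable ?_ |>.stronglyMeasurableAtFilter
      fun_prop) hcont).const_sub
      (uGamma ρ 0)
  rw [auxP_one hρ hx]
  refine h.congr_of_eventuallyEq ?_
  filter_upwards [Ioi_mem_nhds hx] with y hy
  have := intervalIntegral.integral_interval_add_Ioi hI
    (hI.mono_set (Ioi_subset_Ioi (le_of_lt hy)))
  unfold uGamma
  rw [← this]
  ring

lemma auxP_prabhakar {ρ θ : ℝ} (hρ : 0 < ρ) (hθ : 0 < θ) (n : ℕ) :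
    auxP ρ n θ = Gamma ρ * θ ^ (ρ - n) * prabhakar 1 (ρ + 1 - n) ρ (-θ) := by
  unfold auxP prabhakar
  rw [← tsum_mul_left]
  refine tsum_congr fun j => ?_
  have e : ρ + j - (n : ℝ) = (ρ - n) + j := by ring
  have hg := (Gamma_pos_of_pos hρ).ne'
  rw [auxD, e, rpow_add hθ, rpow_natCast, neg_pow θ, one_mul, div_eq_mul_inv _ (_ * Gamma _), mul_inv]
  field_simp

theorem stmt_10 (ρ θ : ℝ) (hρ : ρ ∈ Set.Ioc (0 : ℝ) 1) (hθ : 0 < θ)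
    (ν : Measure SchwartzDual) [IsProbabilityMeasure ν]
    (hchar : ∀ ξ : SchwartzMap ℝ ℝ,
        ∫ ω, Complex.exp (Complex.I * ((ω ξ : ℝ) : ℂ)) ∂ν
          = ((uGamma ρ (θ + (∫ x, ξ x * ξ x) / 2) / uGamma ρ θ : ℝ) : ℂ)) :
    (∀ ξ : SchwartzMap ℝ ℝ, ∀ n : ℕ, ∫ ω, (ω ξ) ^ (2 * n + 1) ∂ν = 0) ∧
    (∀ ξ : SchwartzMap ℝ ℝ, ∀ n : ℕ, 1 ≤ n →
      ∫ ω, (ω ξ) ^ (2 * n) ∂ν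
        = (-1 : ℝ) ^ (n + 1) * ((2 * n).factorial : ℝ) * Real.Gamma ρ * θ ^ (ρ - (n : ℝ))
            * (∫ x, ξ x * ξ x) ^ n * prabhakar 1 (ρ + 1 - n) ρ (-θ)
            / ((n.factorial : ℝ) * 2 ^ n * uGamma ρ θ)) := by
  have hmeas : ∀ ξ : SchwartzMap ℝ ℝ, Measurable (fun ω : SchwartzDual => ω ξ) := fun ξ =>
    (WeakDual.eval_continuous ξ).measurable
  have hmap : ∀ (ξ : SchwartzMap ℝ ℝ) (t : ℝ),
      charFun (ν.map (fun ω : SchwartzDual => ω ξ)) t =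
        ((uGamma ρ (θ + ((∫ x, ξ x * ξ x) / 2) * t ^ 2) / uGamma ρ θ : ℝ) : ℂ) := by
    intro ξ t
    rw [charFun_apply_real, integral_map (hmeas ξ).aemeasurable (by fun_prop)]
    have := hchar (t • ξ)
    have e : ∫ x, (t • ξ) x * (t • ξ) x = t ^ 2 * ∫ x, ξ x * ξ x := by
      rw [← integral_const_mul]
      refine integral_congr_ae (ae_of_all _ fun x => ?_)
      simp only [SchwartzMap.smul_apply, smul_eq_mul]
      ring
    rw [e] at this
    rw [show θ + ((∫ x, ξ x * ξ x) / 2) * t ^ 2 = θ + (t ^ 2 * ∫ x, ξ x * ξ x) / 2 by ring, ← this]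
    refine integral_congr_ae (ae_of_all _ fun ω => ?_)
    simp only [map_smul, smul_eq_mul]
    push_cast
    ring_nf
  have hprob : ∀ ξ : SchwartzMap ℝ ℝ,
      IsProbabilityMeasure (ν.map (fun ω : SchwartzDual => ω ξ)) := fun ξ =>
    Measure.isProbabilityMeasure_map (hmeas ξ).aemeasurable
  refine ⟨fun ξ n => ?_, fun ξ n hn => ?_⟩
  · have := hprob ξ
    have := hprob (-ξ)
    have heq : ν.map (fun ω : SchwartzDual => ω ξ) = ν.map (fun ω : SchwartzDual => ω (-ξ)) := by
      apply Measure.ext_of_charFun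
      funext t
      rw [hmap, hmap]
      simp
    have h1 : ∫ ω, (ω ξ) ^ (2 * n + 1) ∂ν = ∫ ω, (ω (-ξ)) ^ (2 * n + 1) ∂ν := by
      rw [← integral_map (f := fun x : ℝ => x ^ (2 * n + 1)) (hmeas ξ).aemeasurable (by fun_prop),
        ← integral_map (f := fun x : ℝ => x ^ (2 * n + 1)) (hmeas (-ξ)).aemeasurable (by fun_prop),
        heq]
    have h2 : ∫ ω : SchwartzDual, (ω (-ξ)) ^ (2 * n + 1) ∂ν = - ∫ ω, (ω ξ) ^ (2 * n + 1) ∂ν := by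
      rw [← integral_neg]
      refine integral_congr_ae (ae_of_all _ fun ω => ?_)
      simp only [map_neg]
      exact Odd.neg_pow ⟨n, rfl⟩ _
    linarith
  · have := hprob ξ
    have hs : 0 ≤ ∫ x, ξ x * ξ x := integral_nonneg fun x => mul_self_nonneg _
    set s := ∫ x, ξ x * ξ x with hsdef
    let F : ℕ → ℝ → ℝ := fun m u =>
      (match m with
        | 0 => uGamma ρ (θ + u)
        | k + 1 => - auxP ρ (k + 1) (θ + u)) / uGamma ρ θ
    have hF : ∀ m, ∀ u, -θ < u → HasDerivAt (F m) (F (m + 1) u) u := by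
      intro m u hu
      have hx : 0 < θ + u := by linarith
      cases m with
      | zero => exact ((uGamma_deriv hρ.1 hx).comp_const_add θ u).div_const _
      | succ k => exact (((auxP_deriv hρ k hx).comp_const_add θ u).fun_neg).div_const _
    have := aux_moment (s / 2) θ (by positivity) hθ n (ν.map (fun ω : SchwartzDual => ω ξ)) F hF (by
      intro t
      have h := congrArg Complex.re (hmap ξ t)
      rw [charFun_apply_real, Complex.ofReal_re] at h
      have hre : ∀ x : ℝ, (Complex.exp (t * x * Complex.I)).re = cos (t * x) := fun x => by
        rw [← Complex.ofReal_mul, Complex.exp_ofReal_mul_I_re]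
      have hi : Integrable (fun x : ℝ => Complex.exp (t * x * Complex.I))
          (ν.map (fun ω : SchwartzDual => ω ξ)) := by
        refine Integrable.of_bound (C := 1) (by fun_prop) (ae_of_all _ fun x => ?_)
        rw [← Complex.ofReal_mul, Complex.norm_exp_ofReal_mul_I]
      have h2 := integral_re hi
      simp only [RCLike.re_to_complex, hre] at h2
      rw [h2, h])
    rw [integral_map (hmeas ξ).aemeasurable (by fun_prop)] at this
    rw [this]
    obtain ⟨k, rfl⟩ : ∃ k, n = k + 1 := ⟨n - 1, by omega⟩
    simp only [F, add_zero]
    rw [auxP_prabhakar hρ.1 hθ]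
    rw [show 2 * (s / 2) = s by ring, pow_succ (-1 : ℝ) (k + 1)]
    simp only [div_eq_mul_inv, mul_inv]
    ring
end
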